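/- arXiv:2012.00844 — 7 statements merged into one kernel-verified Lean document; each statement's English description precedes it below -/
import Mathlib

section
/- The map L ↦ V[[z]] ∩ z·L is a bijection from the set of opposite filtrations of V((z)) onto the set of sections of V[[z]], with inverse B ↦ z⁻¹B[z⁻¹]. In particular: (a) for every opposite filtration L, the subspace V[[z]] ∩ z·L is a section; (b) for every section B, the subspace z⁻¹B[z⁻¹] is an opposite filtration; (c) z⁻¹(V[[z]] ∩ z·L)[z⁻¹] = L for every opposite filtration L; (d) V[[z]] ∩ z·(z⁻¹B[z⁻¹]) = B for every section B. -/
/-!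
Setting: `V` a finite-dimensional complex vector space.  We model the space of
formal Laurent series `V((z))` (finitely many negative powers) as
`HahnModule ℤ ℂ V`, which is a module over `ℂ((z)) = LaurentSeries ℂ` and over `ℂ`.
`V[[z]]` is the ℂ-subspace of series with no negative-power coefficients.
-/

open HahnModule

noncomputable section

variable (V : Type*) [AddCommGroup V] [Module ℂ V]

/-- Multiplication by the scalar `c ∈ ℂ` commutes with multiplication by Laurent series. -/
instance hmSMulCommClass : SMulCommClass ℂ (LaurentSeries ℂ) (HahnModule ℤ ℂ V) where
  smul_comm c P m := by
    have hcs : ∀ x : HahnModule ℤ ℂ V, (of ℂ).symm (c • x) = c • (of ℂ).symm x := fun _ => rfl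
    have hsub : ((of ℂ).symm (c • m)).support ⊆ ((of ℂ).symm m).support := by
      intro j hj
      rw [HahnSeries.mem_support] at hj ⊢
      rw [hcs, HahnSeries.coeff_smul] at hj
      intro h
      rw [h, smul_zero] at hj
      exact hj rfl
    apply (of ℂ).symm.injective
    ext a
    rw [hcs, HahnSeries.coeff_smul, HahnModule.coeff_smul,
      HahnModule.coeff_smul_right ((of ℂ).symm m).isPWO_support hsub, Finset.smul_sum]
    exact Finset.sum_congr rfl fun ij _ => by rw [hcs, HahnSeries.coeff_smul, smul_comm]

/-- Multiplication by `z^k` (`k ∈ ℤ`) as a `ℂ`-linear endomorphism of `V((z))`. -/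
def zpowMul (k : ℤ) : HahnModule ℤ ℂ V →ₗ[ℂ] HahnModule ℤ ℂ V where
  toFun m := (HahnSeries.single k (1 : ℂ) : LaurentSeries ℂ) • m
  map_add' x y := _root_.smul_add _ x y
  map_smul' c m := (smul_comm c _ m).symm

/-- `V[[z]] ⊆ V((z))`: the ℂ-subspace of series with vanishing coefficients in
negative degrees. -/
def posPart : Submodule ℂ (HahnModule ℤ ℂ V) where
  carrier := {f | ∀ n : ℤ, n < 0 → ((of ℂ).symm f).coeff n = 0}
  zero_mem' := fun n _ => rfl
  add_mem' := by
    intro a b ha hb n hn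
    rw [of_symm_add, HahnSeries.coeff_add, ha n hn, hb n hn, add_zero]
  smul_mem' := by
    intro c f hf n hn
    have : (of ℂ).symm (c • f) = c • (of ℂ).symm f := rfl
    rw [this, HahnSeries.coeff_smul, hf n hn, smul_zero]

/-- The constant-term map `V((z)) → V`, `f ↦ f(0)` (the coefficient of `z⁰`). -/
def constTerm : HahnModule ℤ ℂ V →ₗ[ℂ] V where
  toFun f := ((of ℂ).symm f).coeff 0
  map_add' x y := by
    show ((of ℂ).symm (x + y)).coeff 0 = ((of ℂ).symm x).coeff 0 + ((of ℂ).symm y).coeff 0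
    rw [of_symm_add, HahnSeries.coeff_add]
  map_smul' c f := by
    show ((of ℂ).symm (c • f)).coeff 0 = c • ((of ℂ).symm f).coeff 0
    have : (of ℂ).symm (c • f) = c • (of ℂ).symm f := rfl
    rw [this, HahnSeries.coeff_smul]

variable {V}

/-- A *section* of `V[[z]]`: a ℂ-subspace `B ⊆ V[[z]]` such that the constant-term
map `B → V` is a ℂ-linear isomorphism (i.e. bijective). -/
def IsSection (B : Submodule ℂ (HahnModule ℤ ℂ V)) : Prop :=
  B ≤ posPart V ∧ Function.Bijective ⇑((constTerm V).comp B.subtype)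

/-- An *opposite filtration* of `V((z))`: a ℂ-subspace `L` with
`V((z)) = V[[z]] ⊕ L` and `L ⊆ z·L`. -/
def IsOppositeFiltration (L : Submodule ℂ (HahnModule ℤ ℂ V)) : Prop :=
  IsCompl (posPart V) L ∧ L ≤ L.map (zpowMul V 1)

/-- The section `V[[z]] ∩ z·L` attached to an opposite filtration `L`. -/
def sectionOf (L : Submodule ℂ (HahnModule ℤ ℂ V)) : Submodule ℂ (HahnModule ℤ ℂ V) :=
  posPart V ⊓ L.map (zpowMul V 1)

/-- The opposite filtration `z⁻¹B[z⁻¹]`, the ℂ-linear span of `{z⁻ʲ·b : j ≥ 1, b ∈ B}`,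
attached to a section `B`. -/
def oppositeOf (B : Submodule ℂ (HahnModule ℤ ℂ V)) : Submodule ℂ (HahnModule ℤ ℂ V) :=
  Submodule.span ℂ {x | ∃ j : ℕ, 1 ≤ j ∧ ∃ b ∈ B, x = zpowMul V (-(j : ℤ)) b}

/-!
Everything takes place in the modular lattice of subspaces of `V((z))`, on which multiplication by
`z` acts as an automorphism `σ`. Put `P = V[[z]]`, so that `σ P ≤ P` and `⨆ σ⁻ⁿ P = ⊤`. A section is
exactly a complement `B` of `σ P` inside `P`. If `L` is a complement of `P`, then `σ L` is a
complement of `σ P`, and the modular law turns `P ⊓ σ L` into a complement of `σ P` inside `P`.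
Conversely `σ⁻ⁿ⁻¹ B` is a complement of `σ⁻ⁿ P` inside `σ⁻ⁿ⁻¹ P`; adding up these layers gives
`σ⁻ⁿ⁻¹ P = P ⊕ σ⁻¹ B ⊕ ⋯ ⊕ σ⁻ⁿ⁻¹ B`, whose union over `n` is `⊤ = P ⊕ ⨆ σ⁻ⁿ⁻¹ B`. The two maps are
mutually inverse because comparable complements in a modular lattice are equal.
-/

section Lattice

variable {α : Type*}

/-- The lattice form of a section of `V[[z]]`: `b` is a complement of `σ p` inside `p`, where `σ`
stands for multiplication by `z` and `p` for `V[[z]]`. -/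
structure IsShiftSection [Lattice α] [OrderBot α] (σ : α ≃o α) (p b : α) : Prop where
  disjoint : Disjoint (σ p) b
  sup_eq : σ p ⊔ b = p

/-- The lattice form of an opposite filtration: a complement `l` of `p` with `l ≤ σ l`. -/
structure IsShiftOpposite [Lattice α] [BoundedOrder α] (σ : α ≃o α) (p l : α) : Prop where
  isCompl : IsCompl p l
  le_map : l ≤ σ l

/-- The lattice form of `L ↦ V[[z]] ∩ z·L`. -/
def shiftSection [SemilatticeInf α] (σ : α ≃o α) (p l : α) : α := p ⊓ σ l

/-- The lattice form of `B ↦ z⁻¹B[z⁻¹]`. The exponent is `n + 1` because `z⁻ʲ` occurs for `j ≥ 1`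
only. -/
def shiftOpposite [CompleteLattice α] (σ : α ≃o α) (b : α) : α := ⨆ n : ℕ, (σ⁻¹ ^ (n + 1)) b

theorem apply_inv_pow_succ_apply [LE α] (σ : α ≃o α) (n : ℕ) (x : α) :
    σ ((σ⁻¹ ^ (n + 1)) x) = (σ⁻¹ ^ n) x := by
  rw [pow_succ', RelIso.mul_apply, RelIso.apply_inv_self]

theorem inv_pow_succ_apply_apply [LE α] (σ : α ≃o α) (n : ℕ) (x : α) :
    (σ⁻¹ ^ (n + 1)) (σ x) = (σ⁻¹ ^ n) x := by
  rw [pow_succ, RelIso.mul_apply, RelIso.inv_apply_self]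

theorem isCompl_iff_disjoint_inf_and_inf_sup_eq [Lattice α] [BoundedOrder α] [IsModularLattice α]
    {p k b : α} (hb : b ≤ p) (hpk : Codisjoint p k) :
    IsCompl b k ↔ Disjoint (p ⊓ k) b ∧ p ⊓ k ⊔ b = p := by
  have hdisj : Disjoint (p ⊓ k) b ↔ Disjoint b k := by
    rw [disjoint_iff, disjoint_iff, inf_right_comm, inf_eq_right.mpr hb]
  rw [isCompl_iff, hdisj, inf_sup_assoc_of_le k hb, inf_eq_left, codisjoint_iff, sup_comm b]
  refine and_congr_right fun _ => ⟨fun h => h ▸ le_top, fun h => top_unique ?_⟩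
  exact hpk.eq_top.ge.trans (sup_le h le_sup_left)

section Modular

variable [Lattice α] [IsModularLattice α] {σ : α ≃o α} {p b c l : α}

theorem IsShiftSection.eq_of_le [OrderBot α] (hb : IsShiftSection σ p b) (hc : IsShiftSection σ p c)
    (hbc : b ≤ c) : b = c :=
  eq_of_le_of_inf_le_of_sup_le hbc (hc.disjoint.symm.eq_bot.trans_le bot_le)
    (by rw [sup_comm c, sup_comm b, hc.sup_eq, hb.sup_eq])

theorem isShiftSection_shiftSection [BoundedOrder α] (hσp : σ p ≤ p) (hl : IsCompl p l) :
    IsShiftSection σ p (shiftSection σ p l) where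
  disjoint := (σ.isCompl hl).disjoint.mono_right inf_le_right
  sup_eq := by
    rw [shiftSection, inf_comm, ← sup_inf_assoc_of_le _ hσp, (σ.isCompl hl).sup_eq_top, top_inf_eq]

end Modular

section Complete

variable [CompleteLattice α] {σ : α ≃o α} {p b l : α}

theorem inv_pow_succ_le_shiftOpposite (σ : α ≃o α) (b : α) (n : ℕ) :
    (σ⁻¹ ^ (n + 1)) b ≤ shiftOpposite σ b :=
  le_iSup (fun n : ℕ => (σ⁻¹ ^ (n + 1)) b) n

theorem shiftOpposite_le_map (σ : α ≃o α) (b : α) :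
    shiftOpposite σ b ≤ σ (shiftOpposite σ b) :=
  iSup_le fun n => (apply_inv_pow_succ_apply σ (n + 1) b).ge.trans
    (σ.monotone (inv_pow_succ_le_shiftOpposite σ b (n + 1)))

theorem le_map_shiftOpposite (σ : α ≃o α) (b : α) : b ≤ σ (shiftOpposite σ b) :=
  (apply_inv_pow_succ_apply σ 0 b).ge.trans (σ.monotone (inv_pow_succ_le_shiftOpposite σ b 0))

theorem inv_pow_apply_le_self (hl : l ≤ σ l) (n : ℕ) : (σ⁻¹ ^ n) l ≤ l := by
  induction n with
  | zero => exact le_rfl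
  | succ n ih =>
    calc (σ⁻¹ ^ (n + 1)) l ≤ (σ⁻¹ ^ (n + 1)) (σ l) := (σ⁻¹ ^ (n + 1)).monotone hl
      _ = (σ⁻¹ ^ n) l := inv_pow_succ_apply_apply σ n l
      _ ≤ l := ih

theorem shiftOpposite_shiftSection_le (hl : l ≤ σ l) :
    shiftOpposite σ (shiftSection σ p l) ≤ l :=
  iSup_le fun n => calc
    (σ⁻¹ ^ (n + 1)) (p ⊓ σ l) ≤ (σ⁻¹ ^ (n + 1)) (σ l) := (σ⁻¹ ^ (n + 1)).monotone inf_le_right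
    _ = (σ⁻¹ ^ n) l := inv_pow_succ_apply_apply σ n l
    _ ≤ l := inv_pow_apply_le_self hl n

namespace IsShiftSection

theorem disjoint_inv_pow (hb : IsShiftSection σ p b) (n : ℕ) :
    Disjoint ((σ⁻¹ ^ n) p) ((σ⁻¹ ^ (n + 1)) b) := by
  rw [← inv_pow_succ_apply_apply]
  exact hb.disjoint.map_orderIso _

theorem inv_pow_sup_inv_pow_succ (hb : IsShiftSection σ p b) (n : ℕ) :
    (σ⁻¹ ^ n) p ⊔ (σ⁻¹ ^ (n + 1)) b = (σ⁻¹ ^ (n + 1)) p := by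
  rw [← inv_pow_succ_apply_apply, ← map_sup, hb.sup_eq]

theorem sup_partialSups (hb : IsShiftSection σ p b) (n : ℕ) :
    p ⊔ partialSups (fun k => (σ⁻¹ ^ (k + 1)) b) n = (σ⁻¹ ^ (n + 1)) p := by
  induction n with
  | zero =>
    rw [partialSups_zero]
    exact hb.inv_pow_sup_inv_pow_succ 0
  | succ n ih => rw [partialSups_add_one, ← sup_assoc, ih, hb.inv_pow_sup_inv_pow_succ]

variable [IsModularLattice α]

theorem disjoint_partialSups (hb : IsShiftSection σ p b) (n : ℕ) :
    Disjoint p (partialSups (fun k => (σ⁻¹ ^ (k + 1)) b) n) := by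
  induction n with
  | zero =>
    rw [partialSups_zero]
    exact hb.disjoint_inv_pow 0
  | succ n ih =>
    rw [partialSups_add_one]
    refine ih.disjoint_sup_right_of_disjoint_sup_left ?_
    rw [hb.sup_partialSups]
    exact hb.disjoint_inv_pow (n + 1)

variable [IsCompactlyGenerated α]

theorem isShiftOpposite_shiftOpposite (hb : IsShiftSection σ p b)
    (hp : ⨆ n : ℕ, (σ⁻¹ ^ n) p = ⊤) : IsShiftOpposite σ p (shiftOpposite σ b) where
  isCompl := by
    rw [shiftOpposite, ← iSup_partialSups_eq]
    refine ⟨(partialSups _).monotone.directed_le.disjoint_iSup_right.mpr hb.disjoint_partialSups,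
      codisjoint_iff_le_sup.mpr ?_⟩
    rw [← hp, sup_iSup]
    simp_rw [hb.sup_partialSups]
    exact iSup_mono fun n => le_sup_left.trans_eq (hb.inv_pow_sup_inv_pow_succ n)
  le_map := shiftOpposite_le_map σ b

theorem shiftSection_shiftOpposite (hb : IsShiftSection σ p b)
    (hp : ⨆ n : ℕ, (σ⁻¹ ^ n) p = ⊤) : shiftSection σ p (shiftOpposite σ b) = b := by
  have hσp : σ p ≤ p := le_sup_left.trans_eq hb.sup_eq
  have hbp : b ≤ p := le_sup_right.trans_eq hb.sup_eq
  have hsec := isShiftSection_shiftSection hσp (hb.isShiftOpposite_shiftOpposite hp).isCompl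
  exact (hb.eq_of_le hsec (le_inf hbp (le_map_shiftOpposite σ b))).symm

end IsShiftSection

theorem IsShiftOpposite.shiftOpposite_shiftSection [IsModularLattice α] [IsCompactlyGenerated α]
    (hl : IsShiftOpposite σ p l) (hσp : σ p ≤ p) (hp : ⨆ n : ℕ, (σ⁻¹ ^ n) p = ⊤) :
    shiftOpposite σ (shiftSection σ p l) = l := by
  have hsec := isShiftSection_shiftSection hσp hl.isCompl
  have hopp := (hsec.isShiftOpposite_shiftOpposite hp).isCompl
  refine eq_of_le_of_inf_le_of_sup_le (z := p) (shiftOpposite_shiftSection_le hl.le_map) ?_ ?_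
  · exact hl.isCompl.symm.inf_eq_bot.trans_le bot_le
  · exact le_top.trans_eq hopp.symm.sup_eq_top.symm

end Complete

end Lattice

section Laurent

theorem coeff_zpowMul (k : ℤ) (f : HahnModule ℤ ℂ V) (n : ℤ) :
    ((of ℂ).symm (zpowMul V k f)).coeff n = ((of ℂ).symm f).coeff (n - k) := by
  have h := coeff_single_smul_vadd (r := (1 : ℂ)) (x := f) (a := n - k) (b := k)
  rwa [one_smul, vadd_eq_add, add_sub_cancel] at h

theorem zpowMul_zpowMul (k l : ℤ) (f : HahnModule ℤ ℂ V) :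
    zpowMul V k (zpowMul V l f) = zpowMul V (k + l) f := by
  refine (of ℂ).symm.injective (HahnSeries.ext (funext fun n => ?_))
  rw [coeff_zpowMul, coeff_zpowMul, coeff_zpowMul, sub_sub]

theorem zpowMul_zero (f : HahnModule ℤ ℂ V) : zpowMul V 0 f = f :=
  one_smul (LaurentSeries ℂ) f

theorem map_zpowMul_map_zpowMul (k l : ℤ) (W : Submodule ℂ (HahnModule ℤ ℂ V)) :
    (W.map (zpowMul V l)).map (zpowMul V k) = W.map (zpowMul V (k + l)) := by
  rw [← Submodule.map_comp]
  exact congrArg W.map (LinearMap.ext (zpowMul_zpowMul k l))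

variable (V) in
/-- Multiplication by `z` as an automorphism of the lattice of `ℂ`-subspaces of `V((z))`. -/
def mulZ : Submodule ℂ (HahnModule ℤ ℂ V) ≃o Submodule ℂ (HahnModule ℤ ℂ V) :=
  Submodule.orderIsoMapComap <| LinearEquiv.ofLinearMap (zpowMul V 1) (zpowMul V (-1))
    (LinearMap.ext fun f => (zpowMul_zpowMul 1 (-1) f).trans (zpowMul_zero f))
    (LinearMap.ext fun f => (zpowMul_zpowMul (-1) 1 f).trans (zpowMul_zero f))

theorem mulZ_apply (W : Submodule ℂ (HahnModule ℤ ℂ V)) : mulZ V W = W.map (zpowMul V 1) := rfl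

theorem inv_mulZ_pow_apply (n : ℕ) (W : Submodule ℂ (HahnModule ℤ ℂ V)) :
    ((mulZ V)⁻¹ ^ n) W = W.map (zpowMul V (-n)) := by
  induction n with
  | zero =>
    have hid : zpowMul V (-(0 : ℕ)) = LinearMap.id := LinearMap.ext zpowMul_zero
    rw [hid, Submodule.map_id, pow_zero, RelIso.one_apply]
  | succ n ih =>
    apply (mulZ V).injective
    rw [apply_inv_pow_succ_apply, ih, mulZ_apply, map_zpowMul_map_zpowMul]
    congr 2
    omega

theorem mem_map_zpowMul_posPart {k : ℤ} {f : HahnModule ℤ ℂ V} :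
    f ∈ (posPart V).map (zpowMul V k) ↔ ∀ n < k, ((of ℂ).symm f).coeff n = 0 := by
  constructor
  · rintro ⟨g, hg, rfl⟩ n hn
    rw [coeff_zpowMul, hg _ (by omega)]
  · intro hf
    refine ⟨zpowMul V (-k) f, fun n hn => ?_, ?_⟩
    · rw [coeff_zpowMul, hf _ (by omega)]
    · rw [zpowMul_zpowMul, add_neg_cancel, zpowMul_zero]

theorem mulZ_posPart : mulZ V (posPart V) = posPart V ⊓ (constTerm V).ker := by
  ext f
  rw [mulZ_apply, mem_map_zpowMul_posPart]
  refine ⟨fun hf => ⟨fun n hn => hf n (by omega), hf 0 one_pos⟩, fun ⟨hneg, hzero⟩ n hn => ?_⟩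
  obtain hn | rfl : n < 0 ∨ n = 0 := by omega
  exacts [hneg n hn, hzero]

theorem mulZ_posPart_le : mulZ V (posPart V) ≤ posPart V :=
  mulZ_posPart.trans_le inf_le_left

theorem iSup_inv_mulZ_pow_posPart : ⨆ n : ℕ, ((mulZ V)⁻¹ ^ n) (posPart V) = ⊤ := by
  refine eq_top_iff.mpr fun f _ => Submodule.mem_iSup_of_mem (-((of ℂ).symm f).order).toNat ?_
  rw [inv_mulZ_pow_apply, mem_map_zpowMul_posPart]
  exact fun n hn => HahnSeries.coeff_eq_zero_of_lt_order (by omega)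

theorem surjective_domRestrict_constTerm_posPart :
    Function.Surjective ((constTerm V).domRestrict (posPart V)) := fun v =>
  ⟨⟨of ℂ (HahnSeries.single 0 v), fun _ hn => HahnSeries.coeff_single_of_ne hn.ne⟩,
    HahnSeries.coeff_single_same 0 v⟩

theorem isSection_iff_isShiftSection {B : Submodule ℂ (HahnModule ℤ ℂ V)} :
    IsSection B ↔ IsShiftSection (mulZ V) (posPart V) B := by
  have hsurj : Function.Surjective (constTerm V) :=
    surjective_domRestrict_constTerm_posPart.of_comp (g := (posPart V).subtype)
  have hcodisj : Codisjoint (posPart V) (constTerm V).ker :=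
    (LinearMap.surjective_domRestrict_iff hsurj).mp surjective_domRestrict_constTerm_posPart
  have hbij : Function.Bijective ((constTerm V).comp B.subtype) ↔ IsCompl B (constTerm V).ker := by
    rw [isCompl_iff, ← LinearMap.injective_domRestrict_iff,
      ← LinearMap.surjective_domRestrict_iff hsurj]
    rfl
  constructor
  · rintro ⟨hB, hbijB⟩
    obtain ⟨hdisj, hsup⟩ :=
      (isCompl_iff_disjoint_inf_and_inf_sup_eq hB hcodisj).mp (hbij.mp hbijB)
    rw [← mulZ_posPart] at hdisj hsup
    exact ⟨hdisj, hsup⟩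
  · rintro ⟨hdisj, hsup⟩
    have hB : B ≤ posPart V := le_sup_right.trans_eq hsup
    rw [mulZ_posPart] at hdisj hsup
    exact ⟨hB, hbij.mpr ((isCompl_iff_disjoint_inf_and_inf_sup_eq hB hcodisj).mpr ⟨hdisj, hsup⟩)⟩

theorem isOppositeFiltration_iff_isShiftOpposite {L : Submodule ℂ (HahnModule ℤ ℂ V)} :
    IsOppositeFiltration L ↔ IsShiftOpposite (mulZ V) (posPart V) L :=
  ⟨fun h => ⟨h.1, h.2⟩, fun h => ⟨h.1, h.2⟩⟩

theorem sectionOf_eq_shiftSection (L : Submodule ℂ (HahnModule ℤ ℂ V)) :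
    sectionOf L = shiftSection (mulZ V) (posPart V) L := rfl

theorem oppositeOf_eq_shiftOpposite (B : Submodule ℂ (HahnModule ℤ ℂ V)) :
    oppositeOf B = shiftOpposite (mulZ V) B := by
  simp_rw [shiftOpposite, inv_mulZ_pow_apply]
  apply le_antisymm
  · refine Submodule.span_le.mpr ?_
    rintro _ ⟨j, hj, b, hb, rfl⟩
    obtain ⟨n, rfl⟩ := Nat.exists_eq_add_of_le' hj
    exact Submodule.mem_iSup_of_mem n (Submodule.mem_map_of_mem hb)
  · refine iSup_le fun n => Submodule.map_le_iff_le_comap.mpr fun b hb => ?_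
    exact Submodule.subset_span ⟨n + 1, n.succ_pos, b, hb, rfl⟩

end Laurent

theorem section_opposite_bijection_general (V : Type*) [AddCommGroup V] [Module ℂ V] :
    (∀ L : Submodule ℂ (HahnModule ℤ ℂ V), IsOppositeFiltration L → IsSection (sectionOf L)) ∧
    (∀ B : Submodule ℂ (HahnModule ℤ ℂ V), IsSection B → IsOppositeFiltration (oppositeOf B)) ∧
    (∀ L : Submodule ℂ (HahnModule ℤ ℂ V), IsOppositeFiltration L →
      oppositeOf (sectionOf L) = L) ∧
    (∀ B : Submodule ℂ (HahnModule ℤ ℂ V), IsSection B →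
      sectionOf (oppositeOf B) = B) := by
  simp only [isSection_iff_isShiftSection, isOppositeFiltration_iff_isShiftOpposite,
    sectionOf_eq_shiftSection, oppositeOf_eq_shiftOpposite]
  exact ⟨fun _ hL => isShiftSection_shiftSection mulZ_posPart_le hL.isCompl,
    fun _ hB => hB.isShiftOpposite_shiftOpposite iSup_inv_mulZ_pow_posPart,
    fun _ hL => hL.shiftOpposite_shiftSection mulZ_posPart_le iSup_inv_mulZ_pow_posPart,
    fun _ hB => hB.shiftSection_shiftOpposite iSup_inv_mulZ_pow_posPart⟩

/-- `L ↦ V[[z]] ∩ z·L` is a bijection from opposite filtrations of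
`V((z))` onto sections of `V[[z]]`, with inverse `B ↦ z⁻¹B[z⁻¹]`:
(a) `V[[z]] ∩ z·L` is a section; (b) `z⁻¹B[z⁻¹]` is an opposite filtration;
(c) `z⁻¹(V[[z]] ∩ z·L)[z⁻¹] = L`; (d) `V[[z]] ∩ z·(z⁻¹B[z⁻¹]) = B`. -/
theorem section_opposite_bijection
    (V : Type*) [AddCommGroup V] [Module ℂ V] [FiniteDimensional ℂ V] :
    (∀ L : Submodule ℂ (HahnModule ℤ ℂ V), IsOppositeFiltration L → IsSection (sectionOf L)) ∧
    (∀ B : Submodule ℂ (HahnModule ℤ ℂ V), IsSection B → IsOppositeFiltration (oppositeOf B)) ∧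
    (∀ L : Submodule ℂ (HahnModule ℤ ℂ V), IsOppositeFiltration L →
      oppositeOf (sectionOf L) = L) ∧
    (∀ B : Submodule ℂ (HahnModule ℤ ℂ V), IsSection B →
      sectionOf (oppositeOf B) = B) := by
  exact section_opposite_bijection_general V

end
end

section
/- The natural map B̂ ⊗_ℂ ℂ[[z]] → W[[z]], b ⊗ P ↦ P·b, is injective, and, writing B̂[[z]] for its image, one has the internal direct sum of ℂ-vector spaces W[[z]] = B̂[[z]] ⊕ U[[z]], where U[[z]] ⊆ W[[z]] is the subspace of power series all of whose coefficients lie in U. -/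
/-!
Identify `B̂ ⊗ ℂ[[z]]` with the sequences in `B̂`. The natural map followed by reduction modulo `U`
becomes an operator from sequences in `B̂` to sequences in `W / U` that is lower triangular, and
every diagonal entry is the given isomorphism `B̂ ≅ W / U`. By forward substitution such an operator
is bijective. Hence the natural map is injective and its image is a complement of the kernel of
reduction modulo `U`, which is `U[[z]]`.
-/

noncomputable section

variable (W : Type*) [AddCommGroup W] [Module ℂ W]

/-- Formal power series with coefficients in `W`, modelled as sequences `ℕ → W`. -/
abbrev PS (W : Type*) := ℕ → W

/-- The multiplication `ℂ[[z]] × W[[z]] → W[[z]]`,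
`(P·f)ₙ = ∑_{i+j=n} Pᵢ·fⱼ`, as a ℂ-bilinear map. -/
def psSmul : PowerSeries ℂ →ₗ[ℂ] PS W →ₗ[ℂ] PS W :=
  LinearMap.mk₂ ℂ
    (fun P f n => ∑ i ∈ Finset.range (n + 1), (PowerSeries.coeff i P) • f (n - i))
    (by
      intro P P' f
      funext n
      simp [add_smul, Finset.sum_add_distrib])
    (by
      intro c P f
      funext n
      simp [Finset.smul_sum, mul_smul])
    (by
      intro P f f'
      funext n
      simp [smul_add, Finset.sum_add_distrib])
    (by
      intro c P f
      funext n
      simp only [Pi.smul_apply, Finset.smul_sum]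
      exact Finset.sum_congr rfl fun i _ => smul_comm _ _ _)

variable {W}

/-- The natural map `B̂ ⊗_ℂ ℂ[[z]] → W[[z]]`, `b ⊗ P ↦ P·b`. -/
def tensorToPS (B : Submodule ℂ (PS W)) :
    TensorProduct ℂ B (PowerSeries ℂ) →ₗ[ℂ] PS W :=
  TensorProduct.lift (((psSmul W).flip).comp B.subtype)

/-- The subspace `U[[z]] ⊆ W[[z]]` of power series all of whose coefficients lie
in `U`. -/
def coeffIn (U : Submodule ℂ W) : Submodule ℂ (PS W) where
  carrier := {f | ∀ n, f n ∈ U}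
  zero_mem' := fun _ => U.zero_mem
  add_mem' := fun hf hg n => U.add_mem (hf n) (hg n)
  smul_mem' := fun c _ hf n => U.smul_mem c (hf n)

section LinearOperators

variable {R M N P : Type*} [Ring R] [AddCommGroup M] [Module R M] [AddCommGroup N] [Module R N]
  [AddCommGroup P] [Module R P]

lemma isCompl_range_ker_of_bijective_comp {f : M →ₗ[R] N} {g : N →ₗ[R] P}
    (h : Function.Bijective (g ∘ₗ f)) : IsCompl (LinearMap.range f) (LinearMap.ker g) := by
  constructor
  · rw [LinearMap.disjoint_ker]
    rintro _ ⟨x, rfl⟩ hx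
    rw [(map_eq_zero_iff (g ∘ₗ f) h.1).1 hx, map_zero]
  · rw [codisjoint_iff, Submodule.eq_top_iff']
    intro y
    obtain ⟨x, hx⟩ := h.2 (g y)
    have remainder : y - f x ∈ LinearMap.ker g := by
      rw [LinearMap.mem_ker, map_sub, ← hx, LinearMap.comp_apply, sub_self]
    exact Submodule.mem_sup.2 ⟨f x, LinearMap.mem_range_self f x, _, remainder, add_sub_cancel _ _⟩

/-- The operator on sequences given by the lower triangular infinite matrix `A`,
`c ↦ (∑_{i ≤ n} A n i (c i))ₙ`; the entries of `A` above the diagonal are ignored. -/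
def lowerTriangular (A : ℕ → ℕ → M →ₗ[R] N) : (ℕ → M) →ₗ[R] (ℕ → N) :=
  LinearMap.pi fun n => ∑ i ∈ Finset.range (n + 1), A n i ∘ₗ LinearMap.proj i

lemma lowerTriangular_apply (A : ℕ → ℕ → M →ₗ[R] N) (c : ℕ → M) (n : ℕ) :
    lowerTriangular A c n = ∑ i ∈ Finset.range (n + 1), A n i (c i) := by
  simp [lowerTriangular]

lemma compLeft_comp_lowerTriangular (g : N →ₗ[R] P) (A : ℕ → ℕ → M →ₗ[R] N) :
    g.compLeft ℕ ∘ₗ lowerTriangular A = lowerTriangular fun n i => g ∘ₗ A n i := by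
  refine LinearMap.ext fun c => funext fun n => ?_
  simp [lowerTriangular_apply]

lemma lowerTriangular_injective {A : ℕ → ℕ → M →ₗ[R] N}
    (hA : ∀ n, Function.Injective (A n n)) : Function.Injective (lowerTriangular A) := by
  refine (injective_iff_map_eq_zero _).2 fun c hc => funext fun n => ?_
  induction n using Nat.strong_induction_on with
  | _ n ih =>
    have below_diagonal : ∑ i ∈ Finset.range n, A n i (c i) = 0 :=
      Finset.sum_eq_zero fun i hi => by rw [ih i (Finset.mem_range.1 hi), Pi.zero_apply, map_zero]
    have row : lowerTriangular A c n = 0 := congrFun hc n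
    rw [lowerTriangular_apply, Finset.sum_range_succ, below_diagonal, zero_add] at row
    exact (map_eq_zero_iff _ (hA n)).1 row

/-- Forward substitution for the triangular system `lowerTriangular A c = d`, where `s n` is used
to solve for the `n`-th unknown and is meant to be a right inverse of the diagonal entry `A n n`. -/
def forwardSubstitution (A : ℕ → ℕ → M →ₗ[R] N) (s : ℕ → N → M) (d : ℕ → N) (n : ℕ) : M :=
  s n (d n - ∑ i : Fin n, A n i (forwardSubstitution A s d i))

lemma lowerTriangular_forwardSubstitution {A : ℕ → ℕ → M →ₗ[R] N} {s : ℕ → N → M}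
    (hs : ∀ n, Function.RightInverse (s n) (A n n)) (d : ℕ → N) :
    lowerTriangular A (forwardSubstitution A s d) = d := by
  funext n
  have diagonal : A n n (forwardSubstitution A s d n) =
      d n - ∑ i ∈ Finset.range n, A n i (forwardSubstitution A s d i) := by
    rw [forwardSubstitution, hs n, Finset.sum_range]
  rw [lowerTriangular_apply, Finset.sum_range_succ, diagonal, add_sub_cancel]

lemma lowerTriangular_surjective {A : ℕ → ℕ → M →ₗ[R] N}
    (hA : ∀ n, Function.Surjective (A n n)) : Function.Surjective (lowerTriangular A) := by
  choose s hs using fun n => (hA n).hasRightInverse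
  exact fun d => ⟨forwardSubstitution A s d, lowerTriangular_forwardSubstitution hs d⟩

lemma lowerTriangular_bijective {A : ℕ → ℕ → M →ₗ[R] N}
    (hA : ∀ n, Function.Bijective (A n n)) : Function.Bijective (lowerTriangular A) :=
  ⟨lowerTriangular_injective fun n => (hA n).1, lowerTriangular_surjective fun n => (hA n).2⟩

end LinearOperators

section TensorPowerSeries

open scoped TensorProduct PowerSeries

section Coeff

variable {R M ι : Type*} [CommSemiring R] [AddCommMonoid M] [Module R M] [Fintype ι]

variable (R M) in
/-- The map `M ⊗ R[[z]] → M[[z]]`, `m ⊗ P ↦ (Pₙ m)ₙ`, with `M[[z]]` modelled as sequences. -/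
def tensorCoeff : M ⊗[R] R⟦X⟧ →ₗ[R] (ℕ → M) :=
  LinearMap.pi fun n =>
    (TensorProduct.rid R M).toLinearMap ∘ₗ LinearMap.lTensor M (PowerSeries.coeff n)

lemma tensorCoeff_tmul (m : M) (P : R⟦X⟧) (n : ℕ) :
    tensorCoeff R M (m ⊗ₜ P) n = PowerSeries.coeff n P • m := by
  simp [tensorCoeff]

/-- The inverse of `tensorCoeff` in terms of a basis `b` of `M`: a sequence `c` is sent to
`∑ₖ bₖ ⊗ Pₖ`, where the coefficients of `Pₖ` are the `k`-th coordinates of the terms of `c`. -/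
def tensorOfCoeff (b : Module.Basis ι R M) : (ℕ → M) →ₗ[R] M ⊗[R] R⟦X⟧ where
  toFun c := ∑ k, b k ⊗ₜ PowerSeries.mk fun n => b.repr (c n) k
  map_add' c d := by
    simp only [← Finset.sum_add_distrib, ← TensorProduct.tmul_add]
    congr! with k
    ext n
    simp
  map_smul' r c := by
    simp only [Finset.smul_sum, ← TensorProduct.tmul_smul]
    congr! with k
    ext n
    simp

lemma tensorOfCoeff_apply (b : Module.Basis ι R M) (c : ℕ → M) :
    tensorOfCoeff b c = ∑ k, b k ⊗ₜ PowerSeries.mk fun n => b.repr (c n) k :=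
  rfl

lemma tensorCoeff_comp_tensorOfCoeff (b : Module.Basis ι R M) :
    tensorCoeff R M ∘ₗ tensorOfCoeff b = LinearMap.id := by
  refine LinearMap.ext fun c => funext fun n => ?_
  simp only [LinearMap.comp_apply, tensorOfCoeff_apply, map_sum, Finset.sum_apply,
    tensorCoeff_tmul, PowerSeries.coeff_mk]
  exact b.sum_repr (c n)

lemma tensorOfCoeff_comp_tensorCoeff (b : Module.Basis ι R M) :
    tensorOfCoeff b ∘ₗ tensorCoeff R M = LinearMap.id := by
  refine TensorProduct.ext' fun m P => ?_
  have coordinate (k : ι) :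
      (PowerSeries.mk fun n => b.repr (tensorCoeff R M (m ⊗ₜ P) n) k) = b.repr m k • P := by
    ext n
    simp [tensorCoeff_tmul, mul_comm]
  calc tensorOfCoeff b (tensorCoeff R M (m ⊗ₜ P))
      = ∑ k, (b.repr m k • b k) ⊗ₜ P := by
        simp only [tensorOfCoeff_apply, coordinate, TensorProduct.tmul_smul,
          TensorProduct.smul_tmul']
    _ = m ⊗ₜ P := by rw [← TensorProduct.sum_tmul, b.sum_repr]

variable (R M) in
lemma tensorCoeff_bijective [Module.Free R M] [Module.Finite R M] :
    Function.Bijective (tensorCoeff R M) :=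
  let b := Module.Free.chooseBasis R M
  Function.bijective_iff_has_inverse.2 ⟨tensorOfCoeff b,
    LinearMap.congr_fun (tensorOfCoeff_comp_tensorCoeff b),
    LinearMap.congr_fun (tensorCoeff_comp_tensorOfCoeff b)⟩

end Coeff

variable {R M V : Type*} [CommRing R] [AddCommGroup M] [Module R M] [AddCommGroup V] [Module R V]

lemma eq_lowerTriangular_comp_tensorCoeff {β : M →ₗ[R] (ℕ → V)} {T : M ⊗[R] R⟦X⟧ →ₗ[R] (ℕ → V)}
    (hT : ∀ m P n, T (m ⊗ₜ P) n =
      ∑ i ∈ Finset.range (n + 1), PowerSeries.coeff i P • β m (n - i)) :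
    T = lowerTriangular (fun n i => LinearMap.proj (n - i) ∘ₗ β) ∘ₗ tensorCoeff R M := by
  refine TensorProduct.ext' fun m P => funext fun n => ?_
  simp [hT, lowerTriangular_apply, tensorCoeff_tmul]

theorem tensor_powerseries_decomposition_general [Module.Free R M] [Module.Finite R M]
    (U : Submodule R V) (β : M →ₗ[R] (ℕ → V)) (T : M ⊗[R] R⟦X⟧ →ₗ[R] (ℕ → V))
    (hT : ∀ m P n, T (m ⊗ₜ P) n =
      ∑ i ∈ Finset.range (n + 1), PowerSeries.coeff i P • β m (n - i))
    (hβ : Function.Bijective (U.mkQ ∘ₗ LinearMap.proj 0 ∘ₗ β)) :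
    Function.Injective T ∧
      IsCompl (LinearMap.range T) (Submodule.pi Set.univ fun _ => U) := by
  have bijective_mod : Function.Bijective (U.mkQ.compLeft ℕ ∘ₗ T) := by
    rw [eq_lowerTriangular_comp_tensorCoeff hT, ← LinearMap.comp_assoc,
      compLeft_comp_lowerTriangular, LinearMap.coe_comp]
    refine (lowerTriangular_bijective fun n => ?_).comp (tensorCoeff_bijective R M)
    rwa [Nat.sub_self]
  have isCompl_ker := isCompl_range_ker_of_bijective_comp bijective_mod
  rw [LinearMap.ker_compLeft, Submodule.ker_mkQ] at isCompl_ker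
  rw [LinearMap.coe_comp] at bijective_mod
  exact ⟨bijective_mod.1.of_comp, isCompl_ker⟩

end TensorPowerSeries

lemma coeffIn_eq_pi (U : Submodule ℂ W) : coeffIn U = Submodule.pi Set.univ fun _ => U := by
  ext f
  simp [coeffIn]

/-- Let `U ⊆ W` be ℂ-subspaces and `B̂ ⊆ W[[z]]` a
finite-dimensional subspace such that the composite of the constant-term map
`B̂ → W` with the quotient map `W → W/U` is a ℂ-linear isomorphism.  Then the
natural map `B̂ ⊗_ℂ ℂ[[z]] → W[[z]]`, `b ⊗ P ↦ P·b`, is injective, and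
`W[[z]] = B̂[[z]] ⊕ U[[z]]`, where `B̂[[z]]` is its image. -/
theorem tensor_powerseries_decomposition
    (W : Type*) [AddCommGroup W] [Module ℂ W] (U : Submodule ℂ W)
    (B : Submodule ℂ (PS W)) [FiniteDimensional ℂ B]
    (hB : Function.Bijective
      ⇑(U.mkQ.comp ((LinearMap.proj (R := ℂ) (φ := fun _ : ℕ => W) 0).comp B.subtype))) :
    Function.Injective ⇑(tensorToPS B) ∧
    IsCompl (LinearMap.range (tensorToPS B)) (coeffIn U) := by
  rw [coeffIn_eq_pi]
  exact tensor_powerseries_decomposition_general U B.subtype (tensorToPS B) (fun _ _ _ => rfl) hB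

end
end

section
/- For every k ∈ ℤ one has the internal direct sum of ℂ-vector spaces z⁻ᵏT[[z]] = z⁻ᵏB̂[[z]] ⊕ D_f(z⁻ᵏN[[z]]), and consequently T((z)) = B̂((z)) ⊕ D_f(N((z))). -/
noncomputable section

/-!
Formal Laurent series with coefficients in a complex vector space `X` are modelled
as `HahnSeries ℤ X` (coefficients supported on a partially well-ordered, i.e.
bounded-below, set of integers); `X[[z]]` is the subspace of series supported in
nonnegative degrees.
-/

variable (X : Type*) [AddCommGroup X] [Module ℂ X]

/-- `X[[z]] ⊆ X((z))`: series with vanishing coefficients in negative degrees. -/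
def posSub : Submodule ℂ (HahnSeries ℤ X) where
  carrier := {f | ∀ n : ℤ, n < 0 → f.coeff n = 0}
  zero_mem' := fun _ _ => rfl
  add_mem' := by
    intro a b ha hb n hn
    rw [HahnSeries.coeff_add, ha n hn, hb n hn, add_zero]
  smul_mem' := by
    intro c f hf n hn
    rw [HahnSeries.coeff_smul, hf n hn, smul_zero]

/-- Multiplication by `z^k` on `X((z))`, i.e. the shift of coefficients. -/
def shiftBy (k : ℤ) : HahnSeries ℤ X →ₗ[ℂ] HahnSeries ℤ X where
  toFun f :=
    { coeff := fun n => f.coeff (n - k)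
      isPWO_support' := (f.isPWO_support.image_of_monotone
          (fun a b h => add_le_add_right h k)).mono (by
        intro n hn
        rw [Function.mem_support] at hn
        exact ⟨n - k, hn, by ring⟩) }
  map_add' x y := by
    ext n
    simp [HahnSeries.coeff_add]
  map_smul' c x := by
    ext n
    simp [HahnSeries.coeff_smul]

/-- The coefficientwise extension of a ℂ-linear map to Laurent series. -/
def coeffwise {X Y : Type*} [AddCommGroup X] [Module ℂ X] [AddCommGroup Y] [Module ℂ Y]
    (g : X →ₗ[ℂ] Y) : HahnSeries ℤ X →ₗ[ℂ] HahnSeries ℤ Y where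
  toFun f :=
    { coeff := fun n => g (f.coeff n)
      isPWO_support' := f.isPWO_support.mono (by
        intro n hn
        rw [Function.mem_support] at hn
        rw [HahnSeries.mem_support]
        intro h
        rw [h, map_zero] at hn
        exact hn rfl) }
  map_add' x y := by
    ext n
    simp [HahnSeries.coeff_add]
  map_smul' c x := by
    ext n
    simp [HahnSeries.coeff_smul]

/-- The coefficient functional `f ↦ f(k)`. -/
def evCoeff (k : ℤ) : HahnSeries ℤ X →ₗ[ℂ] X where
  toFun f := f.coeff k
  map_add' x y := by simp [HahnSeries.coeff_add]
  map_smul' c x := by simp [HahnSeries.coeff_smul]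

/-- The convolution multiplication `ℂ[[z]] × X[[z]] → X((z))`, `(P·f)ₙ = ∑ Pᵢ·f_{n−i}`,
as a ℂ-bilinear map. -/
def psConv : PowerSeries ℂ →ₗ[ℂ] (posSub X) →ₗ[ℂ] HahnSeries ℤ X :=
  LinearMap.mk₂ ℂ
    (fun P b =>
      { coeff := fun n => ∑ i ∈ Finset.range (n.toNat + 1),
          (PowerSeries.coeff i P) • (b : HahnSeries ℤ X).coeff (n - i)
        isPWO_support' := Set.IsWF.isPWO (BddBelow.wellFoundedOn_lt ⟨0, by
          intro n hn
          rw [Function.mem_support] at hn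
          by_contra hneg
          rw [not_le] at hneg
          exact hn (Finset.sum_eq_zero fun i _ => by
            rw [b.2 (n - i) (by omega), smul_zero]) ⟩) })
    (by
      intro P P' b
      ext n
      simp [add_smul, Finset.sum_add_distrib])
    (by
      intro c P b
      ext n
      simp [Finset.smul_sum, mul_smul])
    (by
      intro P b b'
      ext n
      simp only [Submodule.coe_add, HahnSeries.coeff_add, smul_add]
      rw [Finset.sum_add_distrib])
    (by
      intro c P b
      ext n
      simp only [Submodule.coe_smul, HahnSeries.coeff_smul, Finset.smul_sum]
      exact Finset.sum_congr rfl fun i _ => smul_comm _ _ _)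

variable {X}

/-- `B̂[[z]]`: the image of `B̂ ⊗_ℂ ℂ[[z]]` in `T[[z]]` under `b ⊗ P ↦ P·b`. -/
def psSpan (B : Submodule ℂ (HahnSeries ℤ X)) (hB : B ≤ posSub X) :
    Submodule ℂ (HahnSeries ℤ X) :=
  LinearMap.range (TensorProduct.lift
    (((psConv X).flip).comp (Submodule.inclusion hB)))

/-- `B̂((z))`: the image of `B̂ ⊗_ℂ ℂ((z))` in `T((z))`, equivalently the union of the
subspaces `z⁻ʲ·B̂[[z]]` for `j ≥ 0`. -/
def laurSpan (B : Submodule ℂ (HahnSeries ℤ X)) (hB : B ≤ posSub X) :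
    Submodule ℂ (HahnSeries ℤ X) :=
  ⨆ j : ℕ, (psSpan B hB).map (shiftBy X (-(j : ℤ)))

/-!
Since `D_f` commutes with `z`, it suffices to show `T[[z]] = B̂[[z]] ⊕ D_f(N[[z]])`: shifting gives
the splitting of every `z⁻ᵏT[[z]]`, and the increasing union over `k` that of `T((z))`.

*Spanning.* The constant terms of `B̂` and `w(N)` together span `T`, so
`T[[z]] = B̂ + D_f(N[[z]]) + z T[[z]]`. Iterating, every `t ∈ T[[z]]` is a convergent sum
`∑ zⁱ(bᵢ + D_f βᵢ) = ∑ zⁱbᵢ + D_f(∑ zⁱβᵢ)`, and `∑ zⁱbᵢ ∈ B̂[[z]]` because `B̂` is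
finite-dimensional.

*Disjointness.* Let `x = D_f β` lie in `B̂[[z]]`. Its constant term `w β₀` vanishes in `T/w(N)`, so
`x ∈ z B̂[[z]]` and `w β₀ = 0`. Writing `β₀ = w' m`, the cocycle `w' m + z d' m` is killed by `D_f`;
subtracting it from `β` makes `β` divisible by `z`. Hence `B̂[[z]] ∩ D_f(N[[z]])` is contained in
`z` times itself, and such a subspace of `T[[z]]` is zero.
-/

lemma disjoint_iSup_iSup_of_monotone {ι α : Type*} [Preorder ι] [IsDirectedOrder ι]
    [CompleteLattice α] [IsCompactlyGenerated α] {f g : ι → α} (hf : Monotone f) (hg : Monotone g)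
    (h : ∀ i, Disjoint (f i) (g i)) : Disjoint (⨆ i, f i) (⨆ i, g i) := by
  simp only [hf.directed_le.disjoint_iSup_left, hg.directed_le.disjoint_iSup_right]
  intro i j
  obtain ⟨k, hik, hjk⟩ := exists_ge_ge i j
  exact (h k).mono (hf hik) (hg hjk)

section Shift

lemma coeff_shiftBy (k : ℤ) (f : HahnSeries ℤ X) (n : ℤ) :
    (shiftBy X k f).coeff n = f.coeff (n - k) := rfl

lemma shiftBy_comp_shiftBy (k l : ℤ) : (shiftBy X k).comp (shiftBy X l) = shiftBy X (k + l) := by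
  ext f n
  simp only [LinearMap.comp_apply, coeff_shiftBy, sub_sub]

lemma shiftBy_zero : shiftBy X 0 = LinearMap.id := by
  ext f n
  simp only [coeff_shiftBy, sub_zero, LinearMap.id_apply]

lemma shiftBy_injective (k : ℤ) : Function.Injective (shiftBy X k) := by
  refine Function.LeftInverse.injective (g := shiftBy X (-k)) fun f => ?_
  rw [← LinearMap.comp_apply, shiftBy_comp_shiftBy, neg_add_cancel, shiftBy_zero,
    LinearMap.id_apply]

lemma shiftBy_single (k n : ℤ) (x : X) :
    shiftBy X k (HahnSeries.single n x) = HahnSeries.single (n + k) x := by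
  ext m
  simp [coeff_shiftBy, HahnSeries.coeff_single, sub_eq_iff_eq_add]

lemma single_mem_posSub (x : X) : HahnSeries.single (0 : ℤ) x ∈ posSub X :=
  fun _ hn => HahnSeries.coeff_single_of_ne hn.ne

lemma mem_map_shiftBy_posSub {k : ℤ} {f : HahnSeries ℤ X} :
    f ∈ (posSub X).map (shiftBy X k) ↔ ∀ n < k, f.coeff n = 0 := by
  constructor
  · rintro ⟨g, hg, rfl⟩ n hn
    exact hg _ (by omega)
  · intro h
    refine ⟨shiftBy X (-k) f, fun n hn => h _ (by omega), ?_⟩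
    rw [← LinearMap.comp_apply, shiftBy_comp_shiftBy, add_neg_cancel, shiftBy_zero,
      LinearMap.id_apply]

lemma map_shiftBy_one_posSub_le : (posSub X).map (shiftBy X 1) ≤ posSub X :=
  fun _ hf n hn => mem_map_shiftBy_posSub.1 hf n (by omega)

lemma iSup_map_shiftBy_posSub : ⨆ j : ℕ, (posSub X).map (shiftBy X (-(j : ℤ))) = ⊤ := by
  refine eq_top_iff.2 fun f _ => Submodule.mem_iSup_of_mem (-f.order).toNat ?_
  exact mem_map_shiftBy_posSub.2 fun n hn => HahnSeries.coeff_eq_zero_of_lt_order (by omega)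

lemma monotone_map_shiftBy_neg {S : Submodule ℂ (HahnSeries ℤ X)}
    (hS : S.map (shiftBy X 1) ≤ S) : Monotone fun j : ℕ => S.map (shiftBy X (-(j : ℤ))) := by
  refine monotone_nat_of_le_succ fun j => ?_
  have hcomp : shiftBy X (-(j : ℤ)) = (shiftBy X (-((j + 1 : ℕ) : ℤ))).comp (shiftBy X 1) := by
    rw [shiftBy_comp_shiftBy, Nat.cast_succ, neg_add_rev, neg_add_cancel_comm]
  rw [hcomp, Submodule.map_comp]
  exact Submodule.map_mono hS

lemma eq_bot_of_le_map_shiftBy_one {S : Submodule ℂ (HahnSeries ℤ X)} (hpos : S ≤ posSub X)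
    (hS : S ≤ S.map (shiftBy X 1)) : S = ⊥ := by
  have hcoeff : ∀ n : ℕ, ∀ f ∈ S, f.coeff n = 0 := by
    intro n
    induction n with
    | zero =>
      intro f hf
      obtain ⟨g, hg, rfl⟩ := hS hf
      exact hpos hg _ (by simp)
    | succ n ih =>
      intro f hf
      obtain ⟨g, hg, rfl⟩ := hS hf
      simpa [coeff_shiftBy] using ih g hg
  refine (Submodule.eq_bot_iff S).2 fun f hf => HahnSeries.ext (funext fun n => ?_)
  rcases lt_or_ge n 0 with hn | hn
  · exact hpos hf n hn
  · lift n to ℕ using hn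
    exact hcoeff n f hf

end Shift

section ZSum

/-- The `z`-adically convergent sum `∑ᵢ zⁱ aᵢ` of power series `aᵢ ∈ X[[z]]`, as a linear function
of the sequence `a`; its coefficients are written as in `psConv`. -/
def zSum : (ℕ → posSub X) →ₗ[ℂ] HahnSeries ℤ X where
  toFun a := HahnSeries.ofSuppBddBelow
    (fun n => ∑ i ∈ Finset.range (n.toNat + 1), (a i : HahnSeries ℤ X).coeff (n - i))
    ⟨0, fun n hn => not_lt.1 fun hneg =>
      hn (Finset.sum_eq_zero fun i _ => (a i).2 _ (by omega))⟩
  map_add' a b := by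
    ext n
    simp [HahnSeries.ofSuppBddBelow, Finset.sum_add_distrib]
  map_smul' c a := by
    ext n
    simp [HahnSeries.ofSuppBddBelow, Finset.smul_sum]

lemma coeff_zSum (a : ℕ → posSub X) (n : ℤ) :
    (zSum a).coeff n =
      ∑ i ∈ Finset.range (n.toNat + 1), (a i : HahnSeries ℤ X).coeff (n - i) := rfl

lemma zSum_mem_posSub (a : ℕ → posSub X) : zSum a ∈ posSub X := by
  intro n hn
  rw [coeff_zSum]
  exact Finset.sum_eq_zero fun i _ => (a i).2 _ (by omega)

lemma zSum_eq_add_shiftBy (a : ℕ → posSub X) :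
    zSum a = (a 0 : HahnSeries ℤ X) + shiftBy X 1 (zSum fun i => a (i + 1)) := by
  ext n
  rw [HahnSeries.coeff_add, coeff_shiftBy]
  rcases lt_trichotomy n 0 with hn | rfl | hn
  · rw [zSum_mem_posSub a n hn, (a 0).2 n hn, zSum_mem_posSub _ (n - 1) (by omega), add_zero]
  · rw [zSum_mem_posSub _ (0 - 1) (by omega)]
    simp [coeff_zSum]
  · obtain ⟨m, rfl⟩ : ∃ m : ℕ, n = m + 1 := ⟨(n - 1).toNat, by omega⟩
    have hsucc : ((m : ℤ) + 1).toNat = m + 1 := by omega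
    rw [coeff_zSum, coeff_zSum, hsucc, Finset.sum_range_succ', add_comm, add_sub_cancel_right,
      Int.toNat_natCast]
    simp

lemma psConv_eq_zSum (P : PowerSeries ℂ) (b : posSub X) :
    psConv X P b = zSum fun i => PowerSeries.coeff i P • b := rfl

lemma psConv_eq_add_shiftBy (P : PowerSeries ℂ) (b : posSub X) :
    psConv X P b = PowerSeries.coeff 0 P • (b : HahnSeries ℤ X) +
      shiftBy X 1 (psConv X (PowerSeries.mk fun i => PowerSeries.coeff (i + 1) P) b) := by
  rw [psConv_eq_zSum, zSum_eq_add_shiftBy]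
  simp only [psConv_eq_zSum, PowerSeries.coeff_mk, Submodule.coe_smul]

lemma psConv_X_mul (P : PowerSeries ℂ) (b : posSub X) :
    psConv X (PowerSeries.X * P) b = shiftBy X 1 (psConv X P b) := by
  have htail : (PowerSeries.mk fun i => PowerSeries.coeff (i + 1) (PowerSeries.X * P)) = P := by
    ext i
    rw [PowerSeries.coeff_mk, PowerSeries.coeff_succ_X_mul]
  rw [psConv_eq_add_shiftBy, PowerSeries.coeff_zero_X_mul, zero_smul, zero_add, htail]

lemma zSum_eq_of_forall_eq_add_shiftBy {a : ℕ → posSub X} {t : ℕ → HahnSeries ℤ X}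
    (hpos : ∀ i, t i ∈ posSub X) (ht : ∀ i, t i = a i + shiftBy X 1 (t (i + 1))) :
    zSum a = t 0 := by
  let u : ℕ → HahnSeries ℤ X := fun i => zSum (fun j => a (j + i)) - t i
  have hu : ∀ i, shiftBy X 1 (u (i + 1)) = u i := by
    intro i
    simp only [u]
    rw [map_sub, zSum_eq_add_shiftBy fun j => a (j + i), ht i]
    simp only [zero_add, add_sub_add_left_eq_sub, add_right_comm, add_assoc]
  have hbot : Submodule.span ℂ (Set.range u) = ⊥ := by
    refine eq_bot_of_le_map_shiftBy_one (Submodule.span_le.2 ?_) (Submodule.span_le.2 ?_)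
    · rintro _ ⟨i, rfl⟩
      exact sub_mem (zSum_mem_posSub _) (hpos i)
    · rintro _ ⟨i, rfl⟩
      exact ⟨u (i + 1), Submodule.subset_span ⟨i + 1, rfl⟩, hu i⟩
  exact sub_eq_zero.1 (Submodule.span_eq_bot.1 hbot (u 0) ⟨0, rfl⟩)

lemma map_zSum {Y : Type*} [AddCommGroup Y] [Module ℂ Y]
    {L : HahnSeries ℤ X →ₗ[ℂ] HahnSeries ℤ Y} (hpos : ∀ f ∈ posSub X, L f ∈ posSub Y)
    (hL : L.comp (shiftBy X 1) = (shiftBy Y 1).comp L) (a : ℕ → posSub X) :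
    L (zSum a) = zSum fun i => L.restrict hpos (a i) := by
  refine (zSum_eq_of_forall_eq_add_shiftBy (t := fun i => L (zSum fun j => a (j + i)))
    (fun i => hpos _ (zSum_mem_posSub _)) fun i => ?_).symm
  have hcomm := LinearMap.congr_fun hL (zSum fun j => a (j + (i + 1)))
  simp only [LinearMap.comp_apply] at hcomm
  rw [zSum_eq_add_shiftBy, map_add, ← hcomm]
  simp only [zero_add, LinearMap.coe_restrict_apply, add_right_comm, add_assoc]

lemma exists_zSum_eq_of_posSub_le {S : Submodule ℂ (HahnSeries ℤ X)} (hpos : S ≤ posSub X)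
    (hS : posSub X ≤ S ⊔ (posSub X).map (shiftBy X 1)) {t : HahnSeries ℤ X} (ht : t ∈ posSub X) :
    ∃ a : ℕ → S, zSum (fun i => Submodule.inclusion hpos (a i)) = t := by
  have hstep : ∀ t : posSub X, ∃ (s : S) (r : posSub X),
      (t : HahnSeries ℤ X) = s + shiftBy X 1 r := by
    intro t
    obtain ⟨s, hs, _, ⟨r, hr, rfl⟩, h⟩ := Submodule.mem_sup.1 (hS t.2)
    exact ⟨⟨s, hs⟩, ⟨r, hr⟩, h.symm⟩
  choose s r hsr using hstep
  refine ⟨fun i => s (r^[i] ⟨t, ht⟩),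
    zSum_eq_of_forall_eq_add_shiftBy (t := fun i => (r^[i] ⟨t, ht⟩ : HahnSeries ℤ X))
      (fun i => (r^[i] ⟨t, ht⟩).2) fun i => ?_⟩
  rw [Function.iterate_succ_apply']
  exact hsr _

end ZSum

section PsSpan

variable {B : Submodule ℂ (HahnSeries ℤ X)} {hB : B ≤ posSub X}

lemma psConv_mem_psSpan (P : PowerSeries ℂ) (b : B) :
    psConv X P (Submodule.inclusion hB b) ∈ psSpan B hB :=
  ⟨b ⊗ₜ P, by simp⟩

lemma psSpan_le {S : Submodule ℂ (HahnSeries ℤ X)}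
    (h : ∀ P (b : B), psConv X P (Submodule.inclusion hB b) ∈ S) : psSpan B hB ≤ S := by
  rintro _ ⟨t, rfl⟩
  induction t with
  | zero => simp
  | tmul b P => simpa using h P b
  | add x y hx hy => simpa using add_mem hx hy

lemma psSpan_le_posSub : psSpan B hB ≤ posSub X :=
  psSpan_le fun _ _ => by
    rw [psConv_eq_zSum]
    exact zSum_mem_posSub _

lemma map_shiftBy_one_psSpan_le : (psSpan B hB).map (shiftBy X 1) ≤ psSpan B hB := by
  refine Submodule.map_le_iff_le_comap.2 (psSpan_le fun P b => ?_)
  rw [Submodule.mem_comap, ← psConv_X_mul]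
  exact psConv_mem_psSpan _ _

lemma psSpan_le_sup_map_shiftBy_one :
    psSpan B hB ≤ B ⊔ (psSpan B hB).map (shiftBy X 1) := by
  refine psSpan_le fun P b => ?_
  rw [psConv_eq_add_shiftBy]
  exact Submodule.add_mem_sup (B.smul_mem _ b.2) ⟨_, psConv_mem_psSpan _ _, rfl⟩

lemma zSum_mem_psSpan [FiniteDimensional ℂ B] (b : ℕ → B) :
    zSum (fun i => Submodule.inclusion hB (b i)) ∈ psSpan B hB := by
  let e := Module.finBasis ℂ B
  have hb : (fun i => Submodule.inclusion hB (b i)) =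
      ∑ j, fun i => e.repr (b i) j • Submodule.inclusion hB (e j) := by
    funext i
    simp only [Finset.sum_apply, ← map_smul, ← map_sum, e.sum_repr]
  have hconv : ∀ j, (zSum fun i => e.repr (b i) j • Submodule.inclusion hB (e j)) =
      psConv X (PowerSeries.mk fun i => e.repr (b i) j) (Submodule.inclusion hB (e j)) := by
    intro j
    simp only [psConv_eq_zSum, PowerSeries.coeff_mk]
  rw [hb, map_sum]
  exact sum_mem fun j _ => hconv j ▸ psConv_mem_psSpan _ _

end PsSpan

section TwistedDifferential

variable {N T : Type*} [AddCommGroup N] [Module ℂ N] [AddCommGroup T] [Module ℂ T]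
  {d w : N →ₗ[ℂ] T}

variable (d w) in
/-- The twisted differential `D_f = z·d + w : N((z)) → T((z))`, where `w` is exterior
multiplication by `df`. -/
def twistedDifferential : HahnSeries ℤ N →ₗ[ℂ] HahnSeries ℤ T :=
  (shiftBy T 1).comp (coeffwise d) + coeffwise w

lemma coeff_twistedDifferential (β : HahnSeries ℤ N) (n : ℤ) :
    (twistedDifferential d w β).coeff n = d (β.coeff (n - 1)) + w (β.coeff n) := rfl

lemma twistedDifferential_comp_shiftBy (k : ℤ) :
    (twistedDifferential d w).comp (shiftBy N k) =
      (shiftBy T k).comp (twistedDifferential d w) := by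
  ext β n
  simp only [LinearMap.comp_apply, coeff_twistedDifferential, coeff_shiftBy, sub_right_comm]

lemma twistedDifferential_mem_posSub {β : HahnSeries ℤ N} (hβ : β ∈ posSub N) :
    twistedDifferential d w β ∈ posSub T := by
  intro n hn
  rw [coeff_twistedDifferential, hβ n hn, hβ (n - 1) (by omega), map_zero, map_zero, add_zero]

lemma coeff_zero_twistedDifferential {β : HahnSeries ℤ N} (hβ : β ∈ posSub N) :
    (twistedDifferential d w β).coeff 0 = w (β.coeff 0) := by
  rw [coeff_twistedDifferential, hβ (0 - 1) (by omega), map_zero, zero_add]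

lemma coeffwise_single (n : ℤ) (x : N) :
    coeffwise d (HahnSeries.single n x) = HahnSeries.single n (d x) :=
  HahnSeries.map_single (d : ZeroHom N T)

lemma twistedDifferential_single (n : ℤ) (x : N) :
    twistedDifferential d w (HahnSeries.single n x) =
      HahnSeries.single (n + 1) (d x) + HahnSeries.single n (w x) := by
  simp only [twistedDifferential, LinearMap.add_apply, LinearMap.comp_apply, coeffwise_single,
    shiftBy_single]

lemma map_twistedDifferential_posSub_le :
    (posSub N).map (twistedDifferential d w) ≤ posSub T :=
  Submodule.map_le_iff_le_comap.2 fun _ => twistedDifferential_mem_posSub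

lemma map_twistedDifferential_map_shiftBy (S : Submodule ℂ (HahnSeries ℤ N)) (k : ℤ) :
    (S.map (shiftBy N k)).map (twistedDifferential d w) =
      (S.map (twistedDifferential d w)).map (shiftBy T k) := by
  rw [← Submodule.map_comp, twistedDifferential_comp_shiftBy, Submodule.map_comp]

lemma map_ker_le_map_ker_of_comp_eq_neg {M : Type*} [AddCommGroup M] [Module ℂ M]
    {d' w' : M →ₗ[ℂ] N} (hdd' : d.comp d' = 0) (hdw' : d.comp w' = -(w.comp d'))
    (hker : LinearMap.ker w ≤ LinearMap.range w') :
    (LinearMap.ker w).map d ≤ (LinearMap.ker d).map w := by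
  rintro _ ⟨x, hx, rfl⟩
  obtain ⟨m, rfl⟩ := hker hx
  have hd : d (d' m) = 0 := LinearMap.congr_fun hdd' m
  have hdw : d (w' m) = -w (d' m) := LinearMap.congr_fun hdw' m
  exact ⟨-d' m, by simp [hd], by rw [map_neg, hdw]⟩

lemma exists_twistedDifferential_eq_shiftBy_one
    (hdw : (LinearMap.ker w).map d ≤ (LinearMap.ker d).map w) {β : HahnSeries ℤ N}
    (hβ : β ∈ posSub N) (hw : w (β.coeff 0) = 0) :
    ∃ γ ∈ posSub N, twistedDifferential d w β = shiftBy T 1 (twistedDifferential d w γ) := by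
  obtain ⟨e, he, hwe⟩ := hdw ⟨β.coeff 0, hw, rfl⟩
  let α : HahnSeries ℤ N := HahnSeries.single 0 (β.coeff 0) - HahnSeries.single 1 e
  have hα : twistedDifferential d w α = 0 := by
    simp [α, twistedDifferential_single, hw, hwe, LinearMap.mem_ker.1 he]
  have hβα : β - α ∈ (posSub N).map (shiftBy N 1) := by
    refine mem_map_shiftBy_posSub.2 fun n hn => ?_
    rcases (show n ≤ 0 by omega).lt_or_eq with hn | rfl
    · simp [α, hβ n hn, hn.ne, (hn.trans zero_lt_one).ne]
    · simp [α]
  obtain ⟨γ, hγ, hγβ⟩ := hβα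
  refine ⟨γ, hγ, ?_⟩
  rw [← LinearMap.comp_apply, ← twistedDifferential_comp_shiftBy, LinearMap.comp_apply, hγβ,
    map_sub, hα, sub_zero]

end TwistedDifferential

section Splitting

variable {N T : Type*} [AddCommGroup N] [Module ℂ N] [AddCommGroup T] [Module ℂ T]
  {d w : N →ₗ[ℂ] T} {B : Submodule ℂ (HahnSeries ℤ T)} {hB : B ≤ posSub T}

variable (w B) in
/-- The map `B̂ → T/w(N)` taking a series to the class of its constant term. -/
def constantTermClass : B →ₗ[ℂ] T ⧸ LinearMap.range w :=
  (LinearMap.range w).mkQ.comp ((evCoeff T 0).comp B.subtype)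

lemma constantTermClass_eq_mk (b : B) :
    constantTermClass w B b = Submodule.Quotient.mk ((b : HahnSeries ℤ T).coeff 0) := rfl

lemma disjoint_psSpan_map_twistedDifferential
    (hdw : (LinearMap.ker w).map d ≤ (LinearMap.ker d).map w)
    (hinj : Function.Injective (constantTermClass w B)) :
    Disjoint (psSpan B hB) ((posSub N).map (twistedDifferential d w)) := by
  refine disjoint_iff.2
    (eq_bot_of_le_map_shiftBy_one (inf_le_left.trans psSpan_le_posSub) ?_)
  rintro _ ⟨hx, β, hβ, rfl⟩
  obtain ⟨b, hb, _, ⟨y, hy, rfl⟩, hby⟩ := Submodule.mem_sup.1 (psSpan_le_sup_map_shiftBy_one hx)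
  have hb0 : b.coeff 0 = w (β.coeff 0) := by
    rw [← coeff_zero_twistedDifferential hβ, ← hby, HahnSeries.coeff_add, coeff_shiftBy,
      psSpan_le_posSub hy _ (by omega), add_zero]
  obtain rfl : b = 0 := by
    refine congrArg Subtype.val (hinj (a₁ := ⟨b, hb⟩) (a₂ := 0) ?_)
    rw [map_zero, constantTermClass_eq_mk, Submodule.Quotient.mk_eq_zero, hb0]
    exact ⟨_, rfl⟩
  obtain ⟨γ, hγ, hβγ⟩ := exists_twistedDifferential_eq_shiftBy_one hdw hβ hb0.symm
  have hyγ : y = twistedDifferential d w γ :=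
    shiftBy_injective 1 (by rw [← hβγ, ← hby, zero_add])
  exact ⟨y, ⟨hy, γ, hγ, hyγ.symm⟩, by rw [← hby, zero_add]⟩

lemma posSub_le_sup_map_shiftBy_one (hB : B ≤ posSub T)
    (hsurj : Function.Surjective (constantTermClass w B)) :
    posSub T ≤ B ⊔ (posSub N).map (twistedDifferential d w) ⊔ (posSub T).map (shiftBy T 1) := by
  intro t ht
  obtain ⟨b, hb⟩ := hsurj (Submodule.Quotient.mk (t.coeff 0))
  obtain ⟨c, hc : w c = t.coeff 0 - (b : HahnSeries ℤ T).coeff 0⟩ :=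
    (Submodule.Quotient.eq _).1 hb.symm
  let γ : HahnSeries ℤ N := HahnSeries.single 0 c
  have hγ : γ ∈ posSub N := single_mem_posSub c
  have hrest : t - (b + twistedDifferential d w γ) ∈ (posSub T).map (shiftBy T 1) := by
    refine mem_map_shiftBy_posSub.2 fun n hn => ?_
    rcases (show n ≤ 0 by omega).lt_or_eq with hn | rfl
    · exact sub_mem ht (add_mem (hB b.2) (twistedDifferential_mem_posSub hγ)) n hn
    · rw [HahnSeries.coeff_sub, HahnSeries.coeff_add, coeff_zero_twistedDifferential hγ,
        HahnSeries.coeff_single_same, hc, add_sub_cancel, sub_self]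
  rw [← add_sub_cancel (b + twistedDifferential d w γ) t]
  exact Submodule.add_mem_sup (Submodule.add_mem_sup b.2 ⟨γ, hγ, rfl⟩) hrest

lemma psSpan_sup_map_twistedDifferential_eq_posSub [FiniteDimensional ℂ B]
    (hsurj : Function.Surjective (constantTermClass w B)) :
    psSpan B hB ⊔ (posSub N).map (twistedDifferential d w) = posSub T := by
  refine le_antisymm (sup_le psSpan_le_posSub map_twistedDifferential_posSub_le) fun t ht => ?_
  obtain ⟨a, ha⟩ := exists_zSum_eq_of_posSub_le (sup_le hB map_twistedDifferential_posSub_le)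
    (posSub_le_sup_map_shiftBy_one (d := d) hB hsurj) ht
  have hdecomp : ∀ i, ∃ (b : B) (β : posSub N),
      (b : HahnSeries ℤ T) + twistedDifferential d w β = a i := by
    intro i
    obtain ⟨b, hb, _, ⟨β, hβ, rfl⟩, h⟩ := Submodule.mem_sup.1 (a i).2
    exact ⟨⟨b, hb⟩, ⟨β, hβ⟩, h⟩
  choose b β hbβ using hdecomp
  have hsum :
      zSum (fun i => Submodule.inclusion hB (b i)) + twistedDifferential d w (zSum β) = t := by
    rw [map_zSum (fun _ => twistedDifferential_mem_posSub) (twistedDifferential_comp_shiftBy 1),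
      ← map_add, ← ha]
    exact congrArg zSum (funext fun i => Subtype.ext (hbβ i))
  rw [← hsum]
  exact Submodule.add_mem_sup (zSum_mem_psSpan b) ⟨_, zSum_mem_posSub β, rfl⟩

lemma isCompl_laurSpan_range_twistedDifferential
    (hdisj : Disjoint (psSpan B hB) ((posSub N).map (twistedDifferential d w)))
    (hsup : psSpan B hB ⊔ (posSub N).map (twistedDifferential d w) = posSub T) :
    IsCompl (laurSpan B hB) (LinearMap.range (twistedDifferential d w)) := by
  let V := (posSub N).map (twistedDifferential d w)
  have hV : V.map (shiftBy T 1) ≤ V := by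
    rw [← map_twistedDifferential_map_shiftBy]
    exact Submodule.map_mono map_shiftBy_one_posSub_le
  have hrange : LinearMap.range (twistedDifferential d w) =
      ⨆ j : ℕ, V.map (shiftBy T (-(j : ℤ))) := by
    simp only [V, ← map_twistedDifferential_map_shiftBy, ← Submodule.map_iSup,
      iSup_map_shiftBy_posSub, Submodule.map_top]
  rw [hrange, laurSpan]
  constructor
  · exact disjoint_iSup_iSup_of_monotone (monotone_map_shiftBy_neg map_shiftBy_one_psSpan_le)
      (monotone_map_shiftBy_neg hV) fun j => Submodule.disjoint_map (shiftBy_injective _) hdisj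
  · rw [codisjoint_iff, ← iSup_sup_eq]
    simp only [← Submodule.map_sup, V, hsup, iSup_map_shiftBy_posSub]

end Splitting

/-- Let `d' : M → N`, `d : N → T`, `w' : M → N`, `w : N → T` be
ℂ-linear maps with `d∘d' = 0`, `d∘w' = −w∘d'` and `ker w ⊆ im w'` (de Rham lemma),
and let `B̂ ⊆ T[[z]]` be a finite-dimensional subspace mapping isomorphically onto
`T/w(N)` under the constant-term map.  With `D_f(β) = z·d(β) + w(β)` on `N((z))`,
one has, for every `k ∈ ℤ`, the internal direct sum
`z⁻ᵏT[[z]] = z⁻ᵏB̂[[z]] ⊕ D_f(z⁻ᵏN[[z]])`, and consequently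
`T((z)) = B̂((z)) ⊕ D_f(N((z)))`. -/
theorem birkhoff_splitting
    (M N T : Type*) [AddCommGroup M] [Module ℂ M] [AddCommGroup N] [Module ℂ N]
    [AddCommGroup T] [Module ℂ T]
    (d' : M →ₗ[ℂ] N) (d : N →ₗ[ℂ] T) (w' : M →ₗ[ℂ] N) (w : N →ₗ[ℂ] T)
    (hdd' : d.comp d' = 0)
    (hdw' : d.comp w' = -(w.comp d'))
    (hker : LinearMap.ker w ≤ LinearMap.range w')
    (B : Submodule ℂ (HahnSeries ℤ T)) (hBpos : B ≤ posSub T)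
    [FiniteDimensional ℂ B]
    (hBiso : Function.Bijective
      ⇑((LinearMap.range w).mkQ.comp ((evCoeff T 0).comp B.subtype))) :
    -- the twisted differential `D_f = z·d + w` on `N((z))`
    let Df : HahnSeries ℤ N →ₗ[ℂ] HahnSeries ℤ T :=
      (shiftBy T 1).comp (coeffwise d) + coeffwise w
    -- internal direct sum in every filter `z⁻ᵏT[[z]]`
    (∀ k : ℤ,
      Disjoint ((psSpan B hBpos).map (shiftBy T (-k)))
        (((posSub N).map (shiftBy N (-k))).map Df) ∧
      ((psSpan B hBpos).map (shiftBy T (-k))) ⊔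
        (((posSub N).map (shiftBy N (-k))).map Df)
          = (posSub T).map (shiftBy T (-k))) ∧
    -- global splitting `T((z)) = B̂((z)) ⊕ D_f(N((z)))`
    IsCompl (laurSpan B hBpos) (LinearMap.range Df) := by
  intro Df
  have hdisj : Disjoint (psSpan B hBpos) ((posSub N).map Df) :=
    disjoint_psSpan_map_twistedDifferential (map_ker_le_map_ker_of_comp_eq_neg hdd' hdw' hker)
      hBiso.injective
  have hsup : psSpan B hBpos ⊔ (posSub N).map Df = posSub T :=
    psSpan_sup_map_twistedDifferential_eq_posSub hBiso.surjective
  refine ⟨fun k => ?_, isCompl_laurSpan_range_twistedDifferential hdisj hsup⟩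
  have hshift : ((posSub N).map (shiftBy N (-k))).map Df =
      ((posSub N).map Df).map (shiftBy T (-k)) :=
    map_twistedDifferential_map_shiftBy _ _
  rw [hshift, ← Submodule.map_sup, hsup]
  exact ⟨Submodule.disjoint_map (shiftBy_injective _) hdisj, rfl⟩

end
end

section
/- Assume ∇ is torsion-free and that the relation [v₁,v₂]*v₃ = ∇_{v₁}(v₂*v₃) + v₁*∇_{v₂}v₃ − ∇_{v₂}(v₁*v₃) − v₂*∇_{v₁}v₃ holds for all v₁, v₂, v₃ ∈ D. Then the map T(u,v,w) := ∇_u(v*w) − (∇_u v)*w − v*(∇_u w) is A-linear in each of the three arguments and is symmetric under every permutation of (u, v, w). -/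
/-!
By torsion-freeness `(∇_u v) * w - (∇_v u) * w = [u, v] * w`, so the compatibility relation says
precisely that `T(u, v, w) = T(v, u, w)`. Commutativity of `*` gives symmetry in the last two
arguments, hence under all permutations. In the middle argument the terms `u(a) • (v * w)` arising
from `∇_u (a • (v * w))` and `(∇_u (a • v)) * w` cancel, so `T` is linear there, and symmetry
carries linearity over to the other two arguments.
-/

section CovDerivMul

variable {M : Type*} [AddCommGroup M] {nabla mul : M → M → M}

/-- The covariant derivative `(∇_u *)(v, w)` of a multiplication `*` on a module, measuring the
failure of `∇_u` to be a derivation of `*`; this is the tensor `T(u, v, w)`. Both operations are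
bare functions, so that each lemma assumes only the laws it uses. -/
def covDerivMul (nabla mul : M → M → M) (u v w : M) : M :=
  nabla u (mul v w) - mul (nabla u v) w - mul v (nabla u w)

theorem covDerivMul_swap_right (hmul_comm : ∀ u v, mul u v = mul v u) (u v w : M) :
    covDerivMul nabla mul u v w = covDerivMul nabla mul u w v := by
  unfold covDerivMul
  rw [hmul_comm v w, hmul_comm (nabla u v) w, hmul_comm v (nabla u w), sub_right_comm]

theorem covDerivMul_swap_left [Bracket M M]
    (htf : ∀ v w, nabla v w - nabla w v = ⁅v, w⁆)
    (hmul_addl : ∀ u v w, mul (u + v) w = mul u w + mul v w)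
    (hrel : ∀ v₁ v₂ v₃, mul ⁅v₁, v₂⁆ v₃ =
      nabla v₁ (mul v₂ v₃) + mul v₁ (nabla v₂ v₃)
        - nabla v₂ (mul v₁ v₃) - mul v₂ (nabla v₁ v₃))
    (u v w : M) :
    covDerivMul nabla mul u v w = covDerivMul nabla mul v u w := by
  have mul_bracket : mul ⁅u, v⁆ w = mul (nabla u v) w - mul (nabla v u) w := by
    rw [← htf]
    exact (AddMonoidHom.mk' (mul · w) (hmul_addl · · w)).map_sub _ _
  rw [← sub_eq_zero]
  calc covDerivMul nabla mul u v w - covDerivMul nabla mul v u w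
      = (nabla u (mul v w) + mul u (nabla v w) - nabla v (mul u w) - mul v (nabla u w))
          - (mul (nabla u v) w - mul (nabla v u) w) := by unfold covDerivMul; abel
    _ = mul ⁅u, v⁆ w - mul ⁅u, v⁆ w := by rw [← hrel, ← mul_bracket]
    _ = 0 := sub_self _

theorem covDerivMul_add_middle
    (hnabla_addr : ∀ v w w', nabla v (w + w') = nabla v w + nabla v w')
    (hmul_addl : ∀ u v w, mul (u + v) w = mul u w + mul v w) (u v v' w : M) :
    covDerivMul nabla mul u (v + v') w =
      covDerivMul nabla mul u v w + covDerivMul nabla mul u v' w := by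
  simp only [covDerivMul, hmul_addl, hnabla_addr]
  abel

theorem covDerivMul_smul_middle {A : Type*} [Semiring A] [Module A M] {anchor : M → A → A}
    (hnabla_leib : ∀ v (a : A) w, nabla v (a • w) = anchor v a • w + a • nabla v w)
    (hmul_addl : ∀ u v w, mul (u + v) w = mul u w + mul v w)
    (hmul_smull : ∀ (a : A) (u w), mul (a • u) w = a • mul u w) (a : A) (u v w : M) :
    covDerivMul nabla mul u (a • v) w = a • covDerivMul nabla mul u v w := by
  calc covDerivMul nabla mul u (a • v) w
      = (anchor u a • mul v w + a • nabla u (mul v w))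
          - (anchor u a • mul v w + a • mul (nabla u v) w) - a • mul v (nabla u w) := by
        simp only [covDerivMul, hmul_addl, hmul_smull, hnabla_leib]
    _ = a • covDerivMul nabla mul u v w := by
        rw [add_sub_add_left_eq_sub, covDerivMul, smul_sub, smul_sub]

/-- Modelled on Lie–Rinehart algebras: `anchor v` is the action of `v : M` on scalars,
which for `M = Derivation ℂ A A` is evaluation. -/
theorem symmetric_tensor_general [Bracket M M] {A : Type*} [Semiring A] [Module A M]
    (anchor : M → A → A)
    (hnabla_addr : ∀ v w w', nabla v (w + w') = nabla v w + nabla v w')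
    (hnabla_leib : ∀ v (a : A) w, nabla v (a • w) = anchor v a • w + a • nabla v w)
    (htf : ∀ v w, nabla v w - nabla w v = ⁅v, w⁆)
    (hmul_addl : ∀ u v w, mul (u + v) w = mul u w + mul v w)
    (hmul_smull : ∀ (a : A) (u w), mul (a • u) w = a • mul u w)
    (hmul_comm : ∀ u v, mul u v = mul v u)
    (hrel : ∀ v₁ v₂ v₃, mul ⁅v₁, v₂⁆ v₃ =
      nabla v₁ (mul v₂ v₃) + mul v₁ (nabla v₂ v₃)
        - nabla v₂ (mul v₁ v₃) - mul v₂ (nabla v₁ v₃)) :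
    let T := covDerivMul nabla mul
    (∀ u u' v w, T (u + u') v w = T u v w + T u' v w) ∧
    (∀ (a : A) (u v w), T (a • u) v w = a • T u v w) ∧
    (∀ u v v' w, T u (v + v') w = T u v w + T u v' w) ∧
    (∀ (a : A) (u v w), T u (a • v) w = a • T u v w) ∧
    (∀ u v w w', T u v (w + w') = T u v w + T u v w') ∧
    (∀ (a : A) (u v w), T u v (a • w) = a • T u v w) ∧
    (∀ u v w, T u v w = T v u w) ∧
    (∀ u v w, T u v w = T u w v) ∧
    (∀ u v w, T u v w = T w v u) := by
  intro T
  have swap_left : ∀ u v w, T u v w = T v u w := covDerivMul_swap_left htf hmul_addl hrel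
  have swap_right : ∀ u v w, T u v w = T u w v := covDerivMul_swap_right hmul_comm
  have add_middle : ∀ u v v' w, T u (v + v') w = T u v w + T u v' w :=
    covDerivMul_add_middle hnabla_addr hmul_addl
  have smul_middle : ∀ (a : A) u v w, T u (a • v) w = a • T u v w :=
    covDerivMul_smul_middle hnabla_leib hmul_addl hmul_smull
  refine ⟨fun u u' v w ↦ ?add_left, fun a u v w ↦ ?smul_left, add_middle, smul_middle,
    fun u v w w' ↦ ?add_right, fun a u v w ↦ ?smul_right, swap_left, swap_right,
    fun u v w ↦ ?swap_outer⟩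
  case add_left => rw [swap_left, add_middle, swap_left v u, swap_left v u']
  case smul_left => rw [swap_left, smul_middle, swap_left v u]
  case add_right => rw [swap_right, add_middle, swap_right u w, swap_right u w']
  case smul_right => rw [swap_right, smul_middle, swap_right u w]
  case swap_outer => rw [swap_right, swap_left, swap_right]

end CovDerivMul

/-- Let `A` be a commutative ℂ-algebra, `D = Derivation ℂ A A` its
module of ℂ-linear derivations, `∇` a torsion-free connection on `D` and `*` an
`A`-bilinear commutative associative multiplication satisfying
`[v₁,v₂]*v₃ = ∇_{v₁}(v₂*v₃) + v₁*∇_{v₂}v₃ − ∇_{v₂}(v₁*v₃) − v₂*∇_{v₁}v₃`.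
Then `T(u,v,w) := ∇_u(v*w) − (∇_u v)*w − v*(∇_u w)` is `A`-trilinear and totally
symmetric. -/
theorem symmetric_tensor
    {A : Type*} [CommRing A] [Algebra ℂ A]
    (nabla : Derivation ℂ A A → Derivation ℂ A A → Derivation ℂ A A)
    -- `∇` is a connection: `A`-linear in the first argument,
    -- additive and Leibniz in the second argument
    (hnabla_addl : ∀ v v' w, nabla (v + v') w = nabla v w + nabla v' w)
    (hnabla_smull : ∀ (a : A) (v w), nabla (a • v) w = a • nabla v w)
    (hnabla_addr : ∀ v w w', nabla v (w + w') = nabla v w + nabla v w')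
    (hnabla_leib : ∀ (v) (a : A) (w), nabla v (a • w) = v a • w + a • nabla v w)
    -- `∇` is torsion-free
    (htf : ∀ v w, nabla v w - nabla w v = ⁅v, w⁆)
    -- `*` is an `A`-bilinear commutative associative multiplication
    (mul : Derivation ℂ A A → Derivation ℂ A A → Derivation ℂ A A)
    (hmul_addl : ∀ u v w, mul (u + v) w = mul u w + mul v w)
    (hmul_smull : ∀ (a : A) (u w), mul (a • u) w = a • mul u w)
    (hmul_comm : ∀ u v, mul u v = mul v u)
    (hmul_assoc : ∀ u v w, mul (mul u v) w = mul u (mul v w))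
    -- the compatibility relation
    (hrel : ∀ v₁ v₂ v₃, mul ⁅v₁, v₂⁆ v₃ =
      nabla v₁ (mul v₂ v₃) + mul v₁ (nabla v₂ v₃)
        - nabla v₂ (mul v₁ v₃) - mul v₂ (nabla v₁ v₃)) :
    -- conclusion about `T(u,v,w) = ∇_u(v*w) − (∇_u v)*w − v*(∇_u w)`
    let T : Derivation ℂ A A → Derivation ℂ A A → Derivation ℂ A A → Derivation ℂ A A :=
      fun u v w => nabla u (mul v w) - mul (nabla u v) w - mul v (nabla u w)
    -- `A`-linearity in each of the three arguments
    (∀ u u' v w, T (u + u') v w = T u v w + T u' v w) ∧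
    (∀ (a : A) (u v w), T (a • u) v w = a • T u v w) ∧
    (∀ u v v' w, T u (v + v') w = T u v w + T u v' w) ∧
    (∀ (a : A) (u v w), T u (a • v) w = a • T u v w) ∧
    (∀ u v w w', T u v (w + w') = T u v w + T u v w') ∧
    (∀ (a : A) (u v w), T u v (a • w) = a • T u v w) ∧
    -- symmetry under every permutation of `(u, v, w)`
    (∀ u v w, T u v w = T v u w) ∧
    (∀ u v w, T u v w = T u w v) ∧
    (∀ u v w, T u v w = T w v u) :=
  symmetric_tensor_general (fun v a ↦ v a) hnabla_addr hnabla_leib htf hmul_addl hmul_smull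
    hmul_comm hrel
end

section
/- Assume ∇ is torsion-free, the relation [v₁,v₂]*v₃ = ∇_{v₁}(v₂*v₃) + v₁*∇_{v₂}v₃ − ∇_{v₂}(v₁*v₃) − v₂*∇_{v₁}v₃ holds for all v₁, v₂, v₃ ∈ D, and E ∈ D satisfies ∇_{v*w}E − v*∇_w E + E*∇_v w + v*w = ∇_v(E*w) for all v, w ∈ D. Then the Euler homogeneity of the product holds: [E, v*w] = v*[E,w] + [E,v]*w + v*w for all v, w ∈ D. -/
/-!
By torsion-freeness `[E, x] = ∇_E x − ∇_x E`, and the relation for `[v₁, v₂] * v₃` expresses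
`[E, v] * w` through `∇`. After both substitutions every term containing `∇_E` cancels from
`[E, v * w] − v * [E, w] − [E, v] * w − v * w`; what is left is exactly the difference of the two
sides of the condition on `∇E`. The two conditions are therefore equivalent.
-/

section EulerField

variable {D : Type*} [AddCommGroup D] [Bracket D D] {nabla : D → D → D} {mul : D → D →+ D}

theorem lie_euler_defect_eq_nabla_euler_defect
    (torsion_free : ∀ v w, nabla v w - nabla w v = ⁅v, w⁆)
    (lie_mul : ∀ v₁ v₂ v₃, mul ⁅v₁, v₂⁆ v₃ =
      nabla v₁ (mul v₂ v₃) + mul v₁ (nabla v₂ v₃)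
        - nabla v₂ (mul v₁ v₃) - mul v₂ (nabla v₁ v₃))
    (E v w : D) :
    ⁅E, mul v w⁆ - (mul v ⁅E, w⁆ + mul ⁅E, v⁆ w + mul v w) =
      nabla v (mul E w)
        - (nabla (mul v w) E - mul v (nabla w E) + mul E (nabla v w) + mul v w) := by
  have lie_product : ⁅E, mul v w⁆ = nabla E (mul v w) - nabla (mul v w) E :=
    (torsion_free E (mul v w)).symm
  have mul_lie : mul v ⁅E, w⁆ = mul v (nabla E w) - mul v (nabla w E) := by
    rw [← torsion_free, map_sub]
  rw [lie_product, mul_lie, lie_mul E v w]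
  abel

theorem euler_homogeneity_general
    (torsion_free : ∀ v w, nabla v w - nabla w v = ⁅v, w⁆)
    (lie_mul : ∀ v₁ v₂ v₃, mul ⁅v₁, v₂⁆ v₃ =
      nabla v₁ (mul v₂ v₃) + mul v₁ (nabla v₂ v₃)
        - nabla v₂ (mul v₁ v₃) - mul v₂ (nabla v₁ v₃))
    (E v w : D) :
    ⁅E, mul v w⁆ = mul v ⁅E, w⁆ + mul ⁅E, v⁆ w + mul v w ↔
      nabla (mul v w) E - mul v (nabla w E) + mul E (nabla v w) + mul v w =
        nabla v (mul E w) := by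
  rw [← sub_eq_zero, lie_euler_defect_eq_nabla_euler_defect torsion_free lie_mul, sub_eq_zero,
    eq_comm]

end EulerField

/-- Let `A` be a commutative ℂ-algebra, `D = Derivation ℂ A A`, `∇`
a torsion-free connection on `D` and `*` an `A`-bilinear commutative associative
multiplication satisfying
`[v₁,v₂]*v₃ = ∇_{v₁}(v₂*v₃) + v₁*∇_{v₂}v₃ − ∇_{v₂}(v₁*v₃) − v₂*∇_{v₁}v₃`, and let
`E ∈ D` satisfy `∇_{v*w}E − v*∇_w E + E*∇_v w + v*w = ∇_v(E*w)` for all `v, w`.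
Then the Euler homogeneity `[E, v*w] = v*[E,w] + [E,v]*w + v*w` holds. -/
theorem euler_homogeneity
    {A : Type*} [CommRing A] [Algebra ℂ A]
    (nabla : Derivation ℂ A A → Derivation ℂ A A → Derivation ℂ A A)
    (hnabla_addl : ∀ v v' w, nabla (v + v') w = nabla v w + nabla v' w)
    (hnabla_smull : ∀ (a : A) (v w), nabla (a • v) w = a • nabla v w)
    (hnabla_addr : ∀ v w w', nabla v (w + w') = nabla v w + nabla v w')
    (hnabla_leib : ∀ (v) (a : A) (w), nabla v (a • w) = v a • w + a • nabla v w)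
    (htf : ∀ v w, nabla v w - nabla w v = ⁅v, w⁆)
    (mul : Derivation ℂ A A → Derivation ℂ A A → Derivation ℂ A A)
    (hmul_addl : ∀ u v w, mul (u + v) w = mul u w + mul v w)
    (hmul_smull : ∀ (a : A) (u w), mul (a • u) w = a • mul u w)
    (hmul_comm : ∀ u v, mul u v = mul v u)
    (hmul_assoc : ∀ u v w, mul (mul u v) w = mul u (mul v w))
    (hrel : ∀ v₁ v₂ v₃, mul ⁅v₁, v₂⁆ v₃ =
      nabla v₁ (mul v₂ v₃) + mul v₁ (nabla v₂ v₃)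
        - nabla v₂ (mul v₁ v₃) - mul v₂ (nabla v₁ v₃))
    (E : Derivation ℂ A A)
    (hE : ∀ v w, nabla (mul v w) E - mul v (nabla w E) + mul E (nabla v w) + mul v w
      = nabla v (mul E w)) :
    ∀ v w, ⁅E, mul v w⁆ = mul v ⁅E, w⁆ + mul ⁅E, v⁆ w + mul v w := by
  have mul_add_right (u v w) : mul u (v + w) = mul u v + mul u w := by
    simp only [hmul_comm u, hmul_addl]
  exact fun v w ↦ (euler_homogeneity_general
    (mul := fun u ↦ AddMonoidHom.mk' (mul u) (mul_add_right u)) htf hrel E v w).mpr (hE v w)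
end

section
/- Assume ∇ is torsion-free and flat, and that the relation [v₁,v₂]*v₃ = ∇_{v₁}(v₂*v₃) + v₁*∇_{v₂}v₃ − ∇_{v₂}(v₁*v₃) − v₂*∇_{v₁}v₃ holds for all v₁, v₂, v₃ ∈ D. Then for every λ ∈ ℂ the connection ∇^λ defined by ∇^λ_v w := ∇_v w − λ·(v*w) is again torsion-free and flat. -/
/-!
The curvature of `∇ - c • μ` is quadratic in `c`: its coefficients are the curvature of `∇`, minus
the covariant exterior derivative `d^∇ μ`, and the commutators `⁅μ v, μ w⁆`. Flatness kills the
first; the compatibility relation says exactly that `d^∇ μ = 0`; and multiplication operators of a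
commutative associative product commute. The torsion changes only by the antisymmetrization of `μ`.
-/

namespace AlgebraicConnection

section Curvature

variable {K L M : Type*} [CommRing K] [LieRing L] [LieAlgebra K L] [AddCommGroup M] [Module K M]

/-- The torsion of a connection `∇` on a Lie algebra `L`, viewed as a `K`-bilinear product
`∇ v w`. -/
def torsion (nabla : L →ₗ[K] Module.End K L) (v w : L) : L :=
  nabla v w - nabla w v - ⁅v, w⁆

/-- The curvature of a connection `∇` on `M`, encoded by its operators `∇ v`; it measures the
failure of `∇` to be a Lie algebra morphism. -/
def curvature (nabla : L →ₗ[K] Module.End K M) (v w : L) : Module.End K M :=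
  ⁅nabla v, nabla w⁆ - nabla ⁅v, w⁆

/-- The covariant exterior derivative `d^∇ μ` of a one-form `μ` with values in `Module.End K M`, for
the connection that `∇` induces there by commutators. -/
def extCovDeriv (nabla mu : L →ₗ[K] Module.End K M) (v w : L) : Module.End K M :=
  ⁅nabla v, mu w⁆ - ⁅nabla w, mu v⁆ - mu ⁅v, w⁆

theorem torsion_sub_smul (nabla mu : L →ₗ[K] Module.End K L) (c : K) (v w : L) :
    torsion (nabla - c • mu) v w = torsion nabla v w - c • (mu v w - mu w v) := by
  simp only [torsion, LinearMap.sub_apply, LinearMap.smul_apply]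
  module

theorem curvature_sub_smul (nabla mu : L →ₗ[K] Module.End K M) (c : K) (v w : L) :
    curvature (nabla - c • mu) v w =
      curvature nabla v w - c • extCovDeriv nabla mu v w + c ^ 2 • ⁅mu v, mu w⁆ := by
  simp only [curvature, extCovDeriv, Ring.lie_def, LinearMap.sub_apply, LinearMap.smul_apply,
    sub_mul, mul_sub, smul_mul_assoc, mul_smul_comm]
  module

theorem extCovDeriv_apply (nabla mu : L →ₗ[K] Module.End K M) (v w : L) (x : M) :
    extCovDeriv nabla mu v w x =
      nabla v (mu w x) + mu v (nabla w x) - nabla w (mu v x) - mu w (nabla v x)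
        - mu ⁅v, w⁆ x := by
  simp only [extCovDeriv, Ring.lie_def, LinearMap.sub_apply, Module.End.mul_apply]
  abel

theorem lie_eq_zero_of_comm_of_assoc (mu : M →ₗ[K] Module.End K M) (hcomm : ∀ u v, mu u v = mu v u)
    (hassoc : ∀ u v w, mu (mu u v) w = mu u (mu v w)) (v w : M) : ⁅mu v, mu w⁆ = 0 := by
  ext u
  rw [Ring.lie_def, LinearMap.sub_apply, Module.End.mul_apply, Module.End.mul_apply,
    ← hassoc v w u, hcomm v w, hassoc w v u, sub_self, LinearMap.zero_apply]

end Curvature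

section Bundling

variable {K A M : Type*} [CommRing K] [CommRing A] [Algebra K A] [AddCommGroup M] [Module K M]
  [Module A M] [IsScalarTower K A M]

/-- A connection on the `A`-module `M`, along the `K`-linear derivations of `A`, as a `K`-linear
family of `K`-linear operators. The product rule makes `∇ v` linear over `K` only. -/
def ofLeibniz (nabla : Derivation K A A → M → M)
    (add_left : ∀ v v' x, nabla (v + v') x = nabla v x + nabla v' x)
    (smul_left : ∀ (a : A) (v x), nabla (a • v) x = a • nabla v x)
    (add_right : ∀ v x x', nabla v (x + x') = nabla v x + nabla v x')
    (leibniz : ∀ (v) (a : A) (x), nabla v (a • x) = v a • x + a • nabla v x) :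
    Derivation K A A →ₗ[K] Module.End K M :=
  LinearMap.mk₂ K nabla add_left
    (fun c v x => by simpa only [algebraMap_smul] using smul_left (algebraMap K A c) v x)
    add_right
    (fun c v x => by
      simpa only [algebraMap_smul, Derivation.map_algebraMap, zero_smul, zero_add]
        using leibniz v (algebraMap K A c) x)

variable (K) in
/-- A commutative `A`-bilinear product on `M` as the `K`-linear family of its multiplication
operators. -/
def mulOfComm (mul : M → M → M)
    (add_left : ∀ x x' y, mul (x + x') y = mul x y + mul x' y)
    (smul_left : ∀ (a : A) (x y), mul (a • x) y = a • mul x y)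
    (comm : ∀ x y, mul x y = mul y x) : M →ₗ[K] Module.End K M :=
  (LinearMap.mk₂ A mul add_left smul_left
    (fun x y y' => by simp only [comm x, add_left])
    (fun a x y => by simp only [comm x, smul_left])).restrictScalars₁₂ K K

end Bundling

end AlgebraicConnection

open AlgebraicConnection

theorem pencil_flat_general {K L : Type*} [CommRing K] [LieRing L] [LieAlgebra K L]
    (nabla mu : L →ₗ[K] Module.End K L)
    (htorsion : ∀ v w, torsion nabla v w = 0) (hcurvature : ∀ v w, curvature nabla v w = 0)
    (hcomm : ∀ u v, mu u v = mu v u) (hassoc : ∀ u v w, mu (mu u v) w = mu u (mu v w))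
    (hclosed : ∀ v w, extCovDeriv nabla mu v w = 0) (c : K) :
    (∀ v w, torsion (nabla - c • mu) v w = 0) ∧ ∀ v w, curvature (nabla - c • mu) v w = 0 := by
  refine ⟨fun v w => ?_, fun v w => ?_⟩
  · rw [torsion_sub_smul, htorsion, hcomm v w, sub_self, smul_zero, sub_zero]
  · rw [curvature_sub_smul, hcurvature, hclosed, lie_eq_zero_of_comm_of_assoc mu hcomm hassoc,
      smul_zero, smul_zero, sub_zero, add_zero]

/-- Let `A` be a commutative ℂ-algebra, `D = Derivation ℂ A A`, `∇`
a torsion-free flat connection on `D` and `*` an `A`-bilinear commutative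
associative multiplication satisfying
`[v₁,v₂]*v₃ = ∇_{v₁}(v₂*v₃) + v₁*∇_{v₂}v₃ − ∇_{v₂}(v₁*v₃) − v₂*∇_{v₁}v₃`.
Then for every `λ ∈ ℂ` the connection `∇^λ_v w = ∇_v w − λ·(v*w)` is again
torsion-free and flat. -/
theorem pencil_flat
    {A : Type*} [CommRing A] [Algebra ℂ A]
    (nabla : Derivation ℂ A A → Derivation ℂ A A → Derivation ℂ A A)
    (hnabla_addl : ∀ v v' w, nabla (v + v') w = nabla v w + nabla v' w)
    (hnabla_smull : ∀ (a : A) (v w), nabla (a • v) w = a • nabla v w)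
    (hnabla_addr : ∀ v w w', nabla v (w + w') = nabla v w + nabla v w')
    (hnabla_leib : ∀ (v) (a : A) (w), nabla v (a • w) = v a • w + a • nabla v w)
    (htf : ∀ v w, nabla v w - nabla w v = ⁅v, w⁆)
    (hflat : ∀ u v w, nabla v (nabla w u) - nabla w (nabla v u) = nabla ⁅v, w⁆ u)
    (mul : Derivation ℂ A A → Derivation ℂ A A → Derivation ℂ A A)
    (hmul_addl : ∀ u v w, mul (u + v) w = mul u w + mul v w)
    (hmul_smull : ∀ (a : A) (u w), mul (a • u) w = a • mul u w)
    (hmul_comm : ∀ u v, mul u v = mul v u)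
    (hmul_assoc : ∀ u v w, mul (mul u v) w = mul u (mul v w))
    (hrel : ∀ v₁ v₂ v₃, mul ⁅v₁, v₂⁆ v₃ =
      nabla v₁ (mul v₂ v₃) + mul v₁ (nabla v₂ v₃)
        - nabla v₂ (mul v₁ v₃) - mul v₂ (nabla v₁ v₃)) :
    ∀ lam : ℂ,
      let nablaLam : Derivation ℂ A A → Derivation ℂ A A → Derivation ℂ A A :=
        fun v w => nabla v w - lam • mul v w
      (∀ v w, nablaLam v w - nablaLam w v = ⁅v, w⁆) ∧
      (∀ u v w, nablaLam v (nablaLam w u) - nablaLam w (nablaLam v u)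
        = nablaLam ⁅v, w⁆ u) := by
  intro lam
  let conn := ofLeibniz nabla hnabla_addl hnabla_smull hnabla_addr hnabla_leib
  let mu := mulOfComm ℂ mul hmul_addl hmul_smull hmul_comm
  have hcurvature (v w) : curvature conn v w = 0 :=
    sub_eq_zero.2 (LinearMap.ext fun u => hflat u v w)
  have hclosed (v w) : extCovDeriv conn mu v w = 0 := LinearMap.ext fun u =>
    (extCovDeriv_apply conn mu v w u).trans (sub_eq_zero.2 (hrel v w u).symm)
  obtain ⟨htorsion_pencil, hcurvature_pencil⟩ := pencil_flat_general conn mu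
    (fun v w => sub_eq_zero.2 (htf v w)) hcurvature hmul_comm hmul_assoc hclosed lam
  exact ⟨fun v w => sub_eq_zero.1 (htorsion_pencil v w),
    fun u v w => LinearMap.congr_fun (sub_eq_zero.1 (hcurvature_pencil v w)) u⟩
end

section
/- Assume ∇ is torsion-free, * is an A-bilinear commutative product on D satisfying [v₁,v₂]*v₃ = ∇_{v₁}(v₂*v₃) + v₁*∇_{v₂}v₃ − ∇_{v₂}(v₁*v₃) − v₂*∇_{v₁}v₃ for all v₁, v₂, v₃ ∈ D, and η : D × D → A is a symmetric A-bilinear form that is ∇-horizontal (v(η(u,w)) = η(∇_v u, w) + η(u, ∇_v w) for all u, v, w) and for which * is self-adjoint (η(u*v, w) = η(u, v*w) for all u, v, w). Call u ∈ D flat if ∇_y u = 0 for all y ∈ D. Then for all flat u, v, w, x ∈ D the element x(η(u*v, w)) ∈ A is invariant under every permutation of the four fields (x, u, v, w). (This is the symmetry of the 4-tensor guaranteeing the local solvability of the potential equation u v w F = η(u*v, w).) -/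
/-!
Write `c(u, v, w) = η(u * v, w)`, a symmetric 3-tensor because `*` is commutative and self-adjoint.
For torsion-free `∇` the relation between `∇` and `*` says exactly that the covariant derivative
`(∇_x *)(u, v)` is symmetric in `x` and `u`. Horizontality of `η` gives
`(∇_x c)(u, v, w) = η((∇_x *)(u, v), w)`, so the 4-tensor `∇c` is symmetric under the adjacent
transpositions, which generate the symmetric group. On flat fields `(∇_x c)(u, v, w)` is
`x(c(u, v, w))`.
-/

open Equiv

theorem apply_comp_perm_of_apply_comp_swap {α β : Type*} {n : ℕ} {f : (Fin (n + 1) → α) → β}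
    (hf : ∀ (i : Fin n) s, f (s ∘ swap i.castSucc i.succ) = f s)
    (σ : Perm (Fin (n + 1))) (s : Fin (n + 1) → α) : f (s ∘ σ) = f s := by
  have hσ : σ ∈ Submonoid.closure (Set.range fun i : Fin n ↦ swap i.castSucc i.succ) := by
    rw [Perm.mclosure_swap_castSucc_succ]
    exact Submonoid.mem_top σ
  induction hσ using Submonoid.closure_induction generalizing s with
  | mem _ h =>
    obtain ⟨i, rfl⟩ := h
    exact hf i s
  | one => rfl
  | mul σ τ _ _ ihσ ihτ => exact (ihτ (s ∘ σ)).trans (ihσ s)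

/-- The bundled biadditive map given by a symmetric function that is additive on the left. -/
def biadditiveOfSymm {G H : Type*} [AddZeroClass G] [AddCommGroup H] (f : G → G → H)
    (hadd : ∀ u v w, f (u + v) w = f u w + f v w) (hsymm : ∀ u v, f u v = f v u) :
    G →+ G →+ H :=
  .mk' (fun u ↦ .mk' (f u) fun v w ↦ by simp only [hsymm u, hadd])
    fun u v ↦ AddMonoidHom.ext (hadd u v)

section CubicTensor

variable {L M : Type*} [AddCommMonoid L] [AddCommMonoid M]

/-- The 3-tensor `c(u, v, w) = η(u * v, w)` of a product and a pairing. -/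
def cubicTensor (mul : L →+ L →+ L) (eta : L →+ L →+ M) : L →+ L →+ L →+ M :=
  mul.compr₂ eta

variable {mul : L →+ L →+ L} {eta : L →+ L →+ M}

theorem cubicTensor_swap_left (hcomm : ∀ u v, mul u v = mul v u) (u v w : L) :
    cubicTensor mul eta u v w = cubicTensor mul eta v u w := by
  simp only [cubicTensor, AddMonoidHom.compr₂_apply, hcomm u v]

theorem cubicTensor_swap_right (hcomm : ∀ u v, mul u v = mul v u)
    (hsymm : ∀ u w, eta u w = eta w u) (hsa : ∀ u v w, eta (mul u v) w = eta u (mul v w))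
    (u v w : L) : cubicTensor mul eta u v w = cubicTensor mul eta u w v :=
  calc
    eta (mul u v) w = eta (mul v u) w := by rw [hcomm]
    _ = eta v (mul u w) := hsa v u w
    _ = eta (mul u w) v := hsymm v (mul u w)

end CubicTensor

section Connection

variable {L M : Type*} [LieRing L] [AddCommGroup M] [LieRingModule L M]

/-- Vanishing of the torsion of `nabla`, where `nabla v w` is `∇_v w`. -/
def IsTorsionFree (nabla : L → L → L) : Prop :=
  ∀ v w, nabla v w - nabla w v = ⁅v, w⁆

/-- Flatness of a field: its covariant derivative vanishes in every direction. -/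
def IsFlatField (nabla : L → L → L) (u : L) : Prop :=
  ∀ y, nabla y u = 0

/-- Horizontality of a pairing with respect to `nabla`. The derivative of a function `m : M` along
a field `v : L` is written as the action `⁅v, m⁆`. -/
def IsHorizontal (nabla : L → L → L) (eta : L →+ L →+ M) : Prop :=
  ∀ v u w, ⁅v, eta u w⁆ = eta (nabla v u) w + eta u (nabla v w)

/-- The compatibility relation between a connection and a product, in the form that involves the
bracket of fields. -/
def IsCompatibleProduct (nabla : L → L → L) (mul : L →+ L →+ L) : Prop :=
  ∀ v₁ v₂ v₃, mul ⁅v₁, v₂⁆ v₃ =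
    nabla v₁ (mul v₂ v₃) + mul v₁ (nabla v₂ v₃) - nabla v₂ (mul v₁ v₃) - mul v₂ (nabla v₁ v₃)

/-- The covariant derivative `(∇_x *)(u, v)` of a product on fields. -/
def covDerivProduct (nabla : L → L → L) (mul : L →+ L →+ L) (x u v : L) : L :=
  nabla x (mul u v) - mul (nabla x u) v - mul u (nabla x v)

/-- The covariant derivative `(∇_x T)(u, v, w)` of a 3-tensor on fields. -/
def covDerivTensor (nabla : L → L → L) (T : L →+ L →+ L →+ M) (x u v w : L) : M :=
  ⁅x, T u v w⁆ - T (nabla x u) v w - T u (nabla x v) w - T u v (nabla x w)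

variable {nabla : L → L → L} {mul : L →+ L →+ L} {eta : L →+ L →+ M} {T : L →+ L →+ L →+ M}

theorem covDerivTensor_swap_left (hT : ∀ u v w, T u v w = T v u w) (x u v w : L) :
    covDerivTensor nabla T x u v w = covDerivTensor nabla T x v u w := by
  simp only [covDerivTensor, hT v u, hT v (nabla x u), hT (nabla x v) u]
  abel

theorem covDerivTensor_swap_right (hT : ∀ u v w, T u v w = T u w v) (x u v w : L) :
    covDerivTensor nabla T x u v w = covDerivTensor nabla T x u w v := by
  simp only [covDerivTensor, hT _ w v, hT _ (nabla x w) v, hT _ w (nabla x v)]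
  abel

theorem covDerivTensor_of_isFlatField {u v w : L} (hu : IsFlatField nabla u)
    (hv : IsFlatField nabla v) (hw : IsFlatField nabla w) (x : L) :
    covDerivTensor nabla T x u v w = ⁅x, T u v w⁆ := by
  simp [covDerivTensor, hu x, hv x, hw x]

theorem covDerivProduct_swap (htf : IsTorsionFree nabla) (hmul : IsCompatibleProduct nabla mul)
    (x u v : L) : covDerivProduct nabla mul x u v = covDerivProduct nabla mul u x v := by
  have hrel : mul (nabla x u) v - mul (nabla u x) v =
      nabla x (mul u v) + mul x (nabla u v) - nabla u (mul x v) - mul u (nabla x v) := by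
    rw [← hmul, ← htf, map_sub, AddMonoidHom.sub_apply]
  unfold covDerivProduct
  linear_combination (norm := abel) -hrel

theorem covDerivTensor_cubicTensor (heta : IsHorizontal nabla eta) (x u v w : L) :
    covDerivTensor nabla (cubicTensor mul eta) x u v w =
      eta (covDerivProduct nabla mul x u v) w := by
  simp only [covDerivTensor, cubicTensor, covDerivProduct, AddMonoidHom.compr₂_apply, heta x,
    map_sub, AddMonoidHom.sub_apply]
  abel

theorem covDerivTensor_cubicTensor_comp_perm (htf : IsTorsionFree nabla)
    (hcomm : ∀ u v, mul u v = mul v u) (hmul : IsCompatibleProduct nabla mul)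
    (hsymm : ∀ u w, eta u w = eta w u) (heta : IsHorizontal nabla eta)
    (hsa : ∀ u v w, eta (mul u v) w = eta u (mul v w)) (σ : Perm (Fin 4)) (s : Fin 4 → L) :
    covDerivTensor nabla (cubicTensor mul eta) (s (σ 0)) (s (σ 1)) (s (σ 2)) (s (σ 3)) =
      covDerivTensor nabla (cubicTensor mul eta) (s 0) (s 1) (s 2) (s 3) := by
  refine apply_comp_perm_of_apply_comp_swap
    (f := fun s ↦ covDerivTensor nabla (cubicTensor mul eta) (s 0) (s 1) (s 2) (s 3))
    (fun i s ↦ ?_) σ s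
  fin_cases i
  · change covDerivTensor nabla _ (s 1) (s 0) (s 2) (s 3) = _
    simp only [covDerivTensor_cubicTensor heta, covDerivProduct_swap htf hmul (s 1)]
  · exact covDerivTensor_swap_left (cubicTensor_swap_left hcomm) (s 0) (s 2) (s 1) (s 3)
  · exact covDerivTensor_swap_right (cubicTensor_swap_right hcomm hsymm hsa)
      (s 0) (s 1) (s 3) (s 2)

theorem potential_four_tensor_symmetry_general (htf : IsTorsionFree nabla)
    (hcomm : ∀ u v, mul u v = mul v u) (hmul : IsCompatibleProduct nabla mul)
    (hsymm : ∀ u w, eta u w = eta w u) (heta : IsHorizontal nabla eta)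
    (hsa : ∀ u v w, eta (mul u v) w = eta u (mul v w)) {s : Fin 4 → L}
    (hs : ∀ i, IsFlatField nabla (s i)) (σ : Perm (Fin 4)) :
    ⁅s (σ 0), eta (mul (s (σ 1)) (s (σ 2))) (s (σ 3))⁆ = ⁅s 0, eta (mul (s 1) (s 2)) (s 3)⁆ := by
  have h := covDerivTensor_cubicTensor_comp_perm htf hcomm hmul hsymm heta hsa σ s
  rwa [covDerivTensor_of_isFlatField (hs _) (hs _) (hs _),
    covDerivTensor_of_isFlatField (hs _) (hs _) (hs _)] at h

end Connection

/-- Let `A` be a commutative ℂ-algebra, `D = Derivation ℂ A A`,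
`∇` a torsion-free connection on `D`, `*` an `A`-bilinear commutative product
satisfying `[v₁,v₂]*v₃ = ∇_{v₁}(v₂*v₃) + v₁*∇_{v₂}v₃ − ∇_{v₂}(v₁*v₃) − v₂*∇_{v₁}v₃`,
and `η` a symmetric `A`-bilinear form which is `∇`-horizontal and for which `*` is
self-adjoint.  Then for all `∇`-flat `u, v, w, x ∈ D` the element
`x(η(u*v, w)) ∈ A` is invariant under every permutation of `(x, u, v, w)`. -/
theorem potential_four_tensor_symmetry
    {A : Type*} [CommRing A] [Algebra ℂ A]
    (nabla : Derivation ℂ A A → Derivation ℂ A A → Derivation ℂ A A)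
    (hnabla_addl : ∀ v v' w, nabla (v + v') w = nabla v w + nabla v' w)
    (hnabla_smull : ∀ (a : A) (v w), nabla (a • v) w = a • nabla v w)
    (hnabla_addr : ∀ v w w', nabla v (w + w') = nabla v w + nabla v w')
    (hnabla_leib : ∀ (v) (a : A) (w), nabla v (a • w) = v a • w + a • nabla v w)
    (htf : ∀ v w, nabla v w - nabla w v = ⁅v, w⁆)
    (mul : Derivation ℂ A A → Derivation ℂ A A → Derivation ℂ A A)
    (hmul_addl : ∀ u v w, mul (u + v) w = mul u w + mul v w)
    (hmul_smull : ∀ (a : A) (u w), mul (a • u) w = a • mul u w)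
    (hmul_comm : ∀ u v, mul u v = mul v u)
    (hrel : ∀ v₁ v₂ v₃, mul ⁅v₁, v₂⁆ v₃ =
      nabla v₁ (mul v₂ v₃) + mul v₁ (nabla v₂ v₃)
        - nabla v₂ (mul v₁ v₃) - mul v₂ (nabla v₁ v₃))
    (eta : Derivation ℂ A A → Derivation ℂ A A → A)
    (heta_addl : ∀ u u' w, eta (u + u') w = eta u w + eta u' w)
    (heta_smull : ∀ (a : A) (u w), eta (a • u) w = a * eta u w)
    (heta_symm : ∀ u w, eta u w = eta w u)
    -- η is ∇-horizontal
    (heta_hor : ∀ v u w, v (eta u w) = eta (nabla v u) w + eta u (nabla v w))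
    -- `*` is self-adjoint with respect to η
    (heta_sa : ∀ u v w, eta (mul u v) w = eta u (mul v w)) :
    ∀ u v w x : Derivation ℂ A A,
      (∀ y, nabla y u = 0) → (∀ y, nabla y v = 0) →
      (∀ y, nabla y w = 0) → (∀ y, nabla y x = 0) →
      (x (eta (mul u v) w) = u (eta (mul x v) w) ∧
       x (eta (mul u v) w) = x (eta (mul v u) w) ∧
       x (eta (mul u v) w) = x (eta (mul u w) v)) := by
  intro u v w x hu hv hw hx
  have hflat : ∀ i, IsFlatField nabla (![x, u, v, w] i) := by
    simp [Fin.forall_fin_succ, IsFlatField, hu, hv, hw, hx]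
  have hperm := potential_four_tensor_symmetry_general
    (mul := biadditiveOfSymm mul hmul_addl hmul_comm)
    (eta := biadditiveOfSymm eta heta_addl heta_symm)
    htf hmul_comm hrel heta_symm heta_hor heta_sa hflat
  exact ⟨(hperm (swap 0 1)).symm, (hperm (swap 1 2)).symm, (hperm (swap 2 3)).symm⟩
end
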